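/- arXiv:math/9212207 — 6 statements merged into one kernel-verified Lean document; each statement's English description precedes it below -/
import Mathlib

section
/- Let S and T be sets and let ψ : S × T → ℂ. Then ψ is a Schur multiplier of norm at most 1 if and only if there exist a complex Hilbert space K (one may take K = ℓ²(S ⊕ T)) and families of vectors x : S → K, y : T → K with sup_{s∈S} ‖x(s)‖ ≤ 1, sup_{t∈T} ‖y(t)‖ ≤ 1 and ψ(s,t) = ⟪x(s), y(t)⟫ for all (s,t) ∈ S × T. -/
open scoped ENNReal NNReal
open MeasureTheory ContinuousLinearMap

noncomputable section

/-- `ψ : S × T → ℂ` is a Schur multiplier of norm at most `C`: for every bounded operator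
`A : ℓ²(S) → ℓ²(T)` there is a bounded `B : ℓ²(S) → ℓ²(T)` whose matrix entries are
`ψ(s,t) · A(s,t)` and with `‖B‖ ≤ C‖A‖`. -/
def IsSchurMultiplier {S T : Type*} (ψ : S × T → ℂ) (C : ℝ) : Prop :=
  letI := Classical.decEq S
  letI := Classical.decEq T
  ∀ A : lp (fun _ : S => ℂ) 2 →L[ℂ] lp (fun _ : T => ℂ) 2,
    ∃ B : lp (fun _ : S => ℂ) 2 →L[ℂ] lp (fun _ : T => ℂ) 2,
      (∀ (s : S) (t : T),
        (inner (𝕜 := ℂ) (lp.single 2 t 1) (B (lp.single 2 s 1)))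
          = ψ (s, t) * inner (𝕜 := ℂ) (lp.single 2 t 1) (A (lp.single 2 s 1))) ∧
      ‖B‖ ≤ C * ‖A‖

/-!
A function `φ` on `S × T` is the matrix of a contraction `ℓ²(S) → ℓ²(T)` iff the block kernel
`[1, φ; φᴴ, 1]` on `S ⊕ T` is positive semidefinite. By the Schur product theorem, entrywise
multiplication by a Gram kernel with diagonal at most `1` therefore preserves contractions.

Conversely, the pairs `(d, φ)` such that `φ` is the off-diagonal block of a positive semidefinite
kernel with diagonal at most `d` form a closed convex cone. A functional that is nonnegative on the
rank-one elements of this cone is itself a positive semidefinite block kernel, which a multiplier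
`ψ` of norm at most `1` preserves. Testing the new kernel on indicators of finite sets shows that
the functional is nonnegative at `(1, ψ)`, so by Hahn–Banach `(1, ψ)` lies in the cone. The
resulting kernel on `S ⊕ T` is a Gram kernel in its reproducing kernel Hilbert space, and
Gram–Schmidt along a well-order of `S ⊕ T` moves its vectors into `ℓ²(S ⊕ T)`.
-/

open Matrix Submodule
open scoped ComplexOrder InnerProduct InnerProductSpace lp

section Gram

variable {ι 𝕜 E : Type*} [RCLike 𝕜] [NormedAddCommGroup E] [InnerProductSpace 𝕜 E]

lemma posSemidef_inner_apply {A : E →ₗ[𝕜] E} (hA : A.IsPositive) (v : ι → E) :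
    (of fun i j ↦ inner 𝕜 (v i) (A (v j))).PosSemidef := by
  refine ⟨?_, fun x ↦ ?_⟩
  · ext i j
    simp [hA.isSymmetric _ _]
  · convert! hA.inner_nonneg_right (x.sum fun i c ↦ c • v i) using 1
    rw [Finsupp.sum_comm]
    simp [Finsupp.sum_inner, Finsupp.inner_sum, map_finsuppSum, inner_smul_left, inner_smul_right,
      Finsupp.mul_sum, mul_comm]

lemma gram_posSemidef (v : ι → E) : (gram 𝕜 v).PosSemidef :=
  posSemidef_inner_apply LinearMap.isPositive_id v

lemma re_gram_apply_self_le_one_iff [InnerProductSpace ℂ E] {v : ι → E} {i : ι} :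
    (gram ℂ v i i).re ≤ 1 ↔ ‖v i‖ ≤ 1 := by
  rw [← sq_le_one_iff₀ (norm_nonneg _), ← inner_self_eq_norm_sq (𝕜 := ℂ)]
  rfl

lemma exists_orthonormal_forall_mem_closure_span [CompleteSpace E] (u : ι → E) :
    ∃ (J : Set ι) (w : J → E), Orthonormal 𝕜 w ∧
      ∀ i, u i ∈ (span 𝕜 (Set.range w)).topologicalClosure := by
  -- Transfinite Gram–Schmidt along a well-order; vectors that reduce to zero are dropped.
  obtain ⟨_, _⟩ := exists_wellFoundedLT ι
  let V (i : ι) : Submodule 𝕜 E := (span 𝕜 (u '' Set.Iio i)).topologicalClosure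
  have (i : ι) : CompleteSpace (V i) := (isClosed_topologicalClosure _).completeSpace_coe
  let g (i : ι) : E := u i - (V i).starProjection (u i)
  have g_orthogonal {i j : ι} (hij : i < j) : inner 𝕜 (g i) (g j) = 0 := by
    have hVij : V i ≤ V j := topologicalClosure_mono
      (span_mono (Set.image_mono (Set.Iio_subset_Iio hij.le)))
    have hu : u i ∈ V j :=
      le_topologicalClosure _ (subset_span (Set.mem_image_of_mem u hij))
    exact inner_right_of_mem_orthogonal (sub_mem hu (hVij ((V i).starProjection_apply_mem _)))
      (sub_starProjection_mem_orthogonal _)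
  let w (i : {i | g i ≠ 0}) : E := (‖g i‖⁻¹ : 𝕜) • g i
  refine ⟨{i | g i ≠ 0}, w, ⟨fun i ↦ norm_smul_inv_norm i.2, fun i j hij ↦ ?_⟩, fun i ↦ ?_⟩
  · rcases lt_or_gt_of_ne (Subtype.coe_ne_coe.2 hij) with h | h
    · simp [w, inner_smul_left, inner_smul_right, g_orthogonal h]
    · simp [w, inner_smul_left, inner_smul_right, inner_eq_zero_symm.1 (g_orthogonal h)]
  · have g_mem (i : ι) : g i ∈ span 𝕜 (Set.range w) := by
      by_cases hi : g i = 0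
      · simp [hi]
      · have : g i = (‖g i‖ : 𝕜) • w ⟨i, hi⟩ := by simp [w, smul_smul, hi]
        rw [this]
        exact smul_mem _ _ (subset_span (Set.mem_range_self _))
    induction i using WellFoundedLT.induction with
    | ind i ih =>
      have hV : V i ≤ (span 𝕜 (Set.range w)).topologicalClosure :=
        topologicalClosure_minimal _ (span_le.2 (Set.image_subset_iff.2 ih))
          (isClosed_topologicalClosure _)
      rw [← sub_add_cancel (u i) ((V i).starProjection (u i))]
      exact add_mem (le_topologicalClosure _ (g_mem i)) (hV ((V i).starProjection_apply_mem _))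

lemma orthonormal_single [DecidableEq ι] :
    Orthonormal 𝕜 fun i ↦ (lp.single 2 i 1 : ℓ²(ι, 𝕜)) := by
  rw [orthonormal_iff_ite]
  intro i j
  simp [lp.inner_single_left, lp.single_apply, Pi.single_apply]

lemma exists_linearIsometry_single [DecidableEq ι] [CompleteSpace E] {v : ι → E}
    (hv : Orthonormal 𝕜 v) :
    ∃ V : ℓ²(ι, 𝕜) →ₗᵢ[𝕜] E, ∀ i, V (lp.single 2 i 1) = v i :=
  ⟨hv.orthogonalFamily.linearIsometry, fun i ↦ by simp⟩

lemma exists_gram_lp_eq_gram [CompleteSpace E] (u : ι → E) :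
    ∃ v : ι → ℓ²(ι, 𝕜), gram 𝕜 v = gram 𝕜 u := by
  classical
  obtain ⟨J, w, hw, hu⟩ := exists_orthonormal_forall_mem_closure_span (𝕜 := 𝕜) u
  let V := hw.orthogonalFamily.linearIsometry
  have hV (i : ι) : ∃ z, V z = u i := by
    have h := hw.orthogonalFamily.range_linearIsometry.ge
    refine h ((topologicalClosure_mono (span_le.2 ?_)) (hu i))
    rintro _ ⟨j, rfl⟩
    exact mem_iSup_of_mem j ⟨1, by simp⟩
  choose z hz using hV
  have single_orthonormal : Orthonormal 𝕜 fun j : J ↦ (lp.single 2 (j : ι) 1 : ℓ²(ι, 𝕜)) :=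
    orthonormal_single.comp _ Subtype.val_injective
  obtain ⟨U, -⟩ := exists_linearIsometry_single single_orthonormal
  refine ⟨fun i ↦ U (z i), ?_⟩
  ext i j
  simp only [gram_apply, U.inner_map_map, ← hz, V.inner_map_map]

lemma exists_gram_lp_eq {P : Matrix ι ι 𝕜} (hP : P.PosSemidef) :
    ∃ v : ι → ℓ²(ι, 𝕜), gram 𝕜 v = P := by
  let K : Matrix ι ι (𝕜 →L[𝕜] 𝕜) := of fun i j ↦ P i j • ContinuousLinearMap.id 𝕜 𝕜
  have hK : K.PosSemidef := by
    refine ((RKHS.posSemidef_tfae (K := K)).out 0 2 :).2 ⟨?_, fun x ↦ ?_⟩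
    · ext i j
      have : star (ContinuousLinearMap.id 𝕜 𝕜) = .id 𝕜 𝕜 := star_one (𝕜 →L[𝕜] 𝕜)
      simp [K, this, hP.isHermitian.apply]
    · have hx := (RCLike.nonneg_iff.1 (hP.2 x)).1
      have inner_K (i j : ι) (a b : 𝕜) : inner 𝕜 (K j i a) b = star a * P i j * b := by
        rw [← hP.isHermitian.apply i j]
        simp [K, mul_comm]
      simpa only [inner_K]
  have : Fact K.PosSemidef := ⟨hK⟩
  obtain ⟨v, hv⟩ := exists_gram_lp_eq_gram (𝕜 := 𝕜)
    fun i ↦ RKHS.kerFun (RKHS.OfKernel K) i (1 : 𝕜)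
  refine ⟨v, hv.trans ?_⟩
  ext i j
  rw [gram_apply, ← RKHS.kernel_inner, RKHS.OfKernel.kernel_ofKernel, ← hP.isHermitian.apply]
  simp [K]

lemma norm_apply_sq_le {P : Matrix ι ι 𝕜} (hP : P.PosSemidef) (i j : ι) :
    ‖P i j‖ ^ 2 ≤ RCLike.re (P i i) * RCLike.re (P j j) := by
  obtain ⟨v, rfl⟩ := exists_gram_lp_eq hP
  simp only [gram_apply, inner_self_eq_norm_sq, ← mul_pow]
  gcongr
  exact norm_inner_le_norm _ _

lemma isClosed_setOf_posSemidef : IsClosed {P : Matrix ι ι 𝕜 | P.PosSemidef} := by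
  simp only [PosSemidef, Set.ofPred_and, Set.ofPred_forall]
  refine (isClosed_eq (by fun_prop) continuous_id).inter (isClosed_iInter fun x ↦ ?_)
  refine isClosed_le continuous_const ?_
  simp only [Finsupp.sum]
  fun_prop

end Gram

section RealLinear

lemma map_eq_sum_single {ι R M N : Type*} [DecidableEq ι] [Semiring R] [AddCommMonoid M]
    [AddCommMonoid N] [Module R M] [Module R N] (f : (ι → M) →ₗ[R] N) {F : Finset ι} {a : ι → M}
    (ha : Function.support a ⊆ F) : f a = ∑ i ∈ F, f (Pi.single i (a i)) := by
  rw [← map_sum]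
  congr
  ext i
  simpa [Finset.sum_pi_single] using not_imp_comm.1 (@ha i)

lemma exists_eq_re_mul (f : ℂ →ₗ[ℝ] ℝ) : ∃ c : ℂ, ∀ z, f z = (c * z).re := by
  refine ⟨f 1 - f Complex.I * Complex.I, fun z ↦ ?_⟩
  have f_eq : f z = z.re * f 1 + z.im * f Complex.I := calc
    f z = f (z.re • 1 + z.im • Complex.I) := by simp
    _ = z.re * f 1 + z.im * f Complex.I := by simp only [map_add, map_smul, smul_eq_mul]
  simp [f_eq, mul_comm]

lemma exists_eq_sum_add_re_sum {ι κ : Type*} (f : (ι → ℝ) × (κ → ℂ) →ₗ[ℝ] ℝ) :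
    ∃ (l : ι → ℝ) (c : κ → ℂ), ∀ (F : Finset ι) (G : Finset κ) (d : ι → ℝ) (φ : κ → ℂ),
      Function.support d ⊆ F → Function.support φ ⊆ G →
        f (d, φ) = ∑ i ∈ F, l i * d i + (∑ p ∈ G, c p * φ p).re := by
  classical
  choose c hc using fun p ↦ exists_eq_re_mul (f ∘ₗ .inr ℝ _ _ ∘ₗ .single ℝ (fun _ ↦ ℂ) p)
  refine ⟨fun i ↦ f (Pi.single i 1, 0), c, fun F G d φ hd hφ ↦ ?_⟩
  have f_single (i : ι) (a : ℝ) : f (Pi.single i 1, 0) * a = f (Pi.single i a, 0) := by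
    simpa [mul_comm] using ((f ∘ₗ .inl ℝ _ _ ∘ₗ .single ℝ (fun _ ↦ ℝ) i).map_smul a 1).symm
  calc f (d, φ) = (f ∘ₗ .inl ℝ _ _) d + (f ∘ₗ .inr ℝ _ _) φ := by simp [← map_add]
    _ = _ := by
      rw [map_eq_sum_single _ hd, map_eq_sum_single _ hφ]
      simp [f_single, ← hc]

end RealLinear

section DiagBlock

variable {S T : Type*} [DecidableEq S] [DecidableEq T] {d d' : S ⊕ T → ℝ} {φ ψ : S × T → ℂ}

/-- The Hermitian kernel on `S ⊕ T` with diagonal blocks `diagonal d` and off-diagonal blocks `φ`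
and `φᴴ`. For `d = 1` it is positive semidefinite exactly when `φ` is the matrix of a contraction
`ℓ²(S) → ℓ²(T)`. -/
def diagBlock (d : S ⊕ T → ℝ) (φ : S × T → ℂ) : Matrix (S ⊕ T) (S ⊕ T) ℂ :=
  fromBlocks (diagonal fun s ↦ (d (.inl s) : ℂ)) (of fun s t ↦ φ (s, t))
    (of fun s t ↦ φ (s, t))ᴴ (diagonal fun t ↦ (d (.inr t) : ℂ))

lemma diagBlock_apply_self (i : S ⊕ T) : diagBlock d φ i i = d i := by
  cases i <;> simp [diagBlock]

lemma diagBlock_apply_inl_inr (s : S) (t : T) : diagBlock d φ (.inl s) (.inr t) = φ (s, t) := rfl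

lemma posSemidef_diagBlock_mono (hd : d ≤ d') (h : (diagBlock d φ).PosSemidef) :
    (diagBlock d' φ).PosSemidef := by
  convert h.add (PosSemidef.diagonal (d := fun i ↦ ((d' i - d i : ℝ) : ℂ)) fun i ↦ ?_) using 1
  · ext (i | i) (j | j)
    · rcases eq_or_ne i j with rfl | h <;> simp [diagBlock, *]
    · simp [diagBlock]
    · simp [diagBlock]
    · rcases eq_or_ne i j with rfl | h <;> simp [diagBlock, *]
  · simpa using hd i

lemma hadamard_diagBlock {P : Matrix (S ⊕ T) (S ⊕ T) ℂ} (hP : P.IsHermitian) :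
    P ⊙ diagBlock d φ = diagBlock (fun i ↦ (P i i).re * d i)
      fun p ↦ P (.inl p.1) (.inr p.2) * φ p := by
  have diag_eq (i : S ⊕ T) : ((P i i).re : ℂ) = P i i := hP.coe_re_apply_self i
  ext (i | i) (j | j)
  · rcases eq_or_ne i j with rfl | h <;> simp [diagBlock, *]
  · simp [diagBlock]
  · simp [diagBlock, ← hP.apply (.inr i) (.inl j)]
  · rcases eq_or_ne i j with rfl | h <;> simp [diagBlock, *]

lemma posSemidef_diagBlock_rescale (r : S ⊕ T → ℝ) (h : (diagBlock d φ).PosSemidef) :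
    (diagBlock (fun i ↦ r i ^ 2 * d i) fun p ↦ r (.inl p.1) * r (.inr p.2) * φ p).PosSemidef := by
  have hr := gram_posSemidef (𝕜 := ℂ) fun i ↦ (r i : ℂ)
  convert! hr.hadamard h
  rw [hadamard_diagBlock hr.isHermitian]
  congr 1 <;> ext <;> simp [pow_two, mul_comm]

/-- The matrix of `A`, indexed in the order (column, row). -/
def matrixEntries (A : ℓ²(S, ℂ) →L[ℂ] ℓ²(T, ℂ)) : S × T → ℂ :=
  fun p ↦ inner ℂ (lp.single 2 p.2 1) (A (lp.single 2 p.1 1))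

lemma matrixEntries_smul (c : ℂ) (A : ℓ²(S, ℂ) →L[ℂ] ℓ²(T, ℂ)) :
    matrixEntries (c • A) = c • matrixEntries A := by
  ext
  simp [matrixEntries]

lemma isSchurMultiplier_iff_matrixEntries {C : ℝ} :
    IsSchurMultiplier ψ C ↔ ∀ A : ℓ²(S, ℂ) →L[ℂ] ℓ²(T, ℂ),
      ∃ B, matrixEntries B = ψ * matrixEntries A ∧ ‖B‖ ≤ C * ‖A‖ := by
  simp only [funext_iff, Prod.forall, matrixEntries, Pi.mul_apply, IsSchurMultiplier]
  convert! Iff.rfl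

lemma posSemidef_diagBlock_matrixEntries {A : ℓ²(S, ℂ) →L[ℂ] ℓ²(T, ℂ)} (hA : ‖A‖ ≤ 1) :
    (diagBlock 1 (matrixEntries A)).PosSemidef := by
  let e (s : S) : ℓ²(S, ℂ) := lp.single 2 s 1
  let f (t : T) : ℓ²(T, ℂ) := lp.single 2 t 1
  have he : Orthonormal ℂ e := orthonormal_single
  have hf : Orthonormal ℂ f := orthonormal_single
  have adjoint_comp_self_le_one : A† ∘L A ≤ 1 := by
    rw [← CStarAlgebra.norm_le_one_iff_of_nonneg _
      ((nonneg_iff_isPositive _).2 (isPositive_adjoint_comp_self A)), norm_adjoint_comp_self]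
    exact mul_le_one₀ hA (norm_nonneg A) hA
  -- The Gram kernel of `(A e, f)` has `A†A` as its upper diagonal block, which the defect `1 - A†A`
  -- completes to `1`. The transpose matches the (column, row) order of `matrixEntries`.
  have h := (gram_posSemidef (𝕜 := ℂ) (Sum.elim (A ∘ e) f)).add
    (posSemidef_inner_apply ((le_def _ _).1 adjoint_comp_self_le_one).toLinearMap (Sum.elim e 0))
  convert! h.transpose
  ext (i | i) (j | j)
  · simp [diagBlock, adjoint_inner_right, inner_sub_right, one_apply,
      orthonormal_iff_ite.1 he, eq_comm]
  · simp [diagBlock, matrixEntries, e, f]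
  · simp [diagBlock, matrixEntries, e, f]
  · simp [diagBlock, orthonormal_iff_ite.1 hf, one_apply, eq_comm]

lemma exists_matrixEntries_eq (h : (diagBlock 1 φ).PosSemidef) :
    ∃ A : ℓ²(S, ℂ) →L[ℂ] ℓ²(T, ℂ), matrixEntries A = φ ∧ ‖A‖ ≤ 1 := by
  obtain ⟨v, hv⟩ := exists_gram_lp_eq h.transpose
  have inner_v (i j : S ⊕ T) : inner ℂ (v i) (v j) = diagBlock 1 φ j i := congr($hv i j)
  have orthonormal_inl : Orthonormal ℂ fun s ↦ v (.inl s) := by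
    simp [orthonormal_iff_ite, inner_v, diagBlock, one_apply, eq_comm]
  have orthonormal_inr : Orthonormal ℂ fun t ↦ v (.inr t) := by
    simp [orthonormal_iff_ite, inner_v, diagBlock, one_apply, eq_comm]
  obtain ⟨V, hV⟩ := exists_linearIsometry_single orthonormal_inl
  obtain ⟨W, hW⟩ := exists_linearIsometry_single orthonormal_inr
  refine ⟨W.toContinuousLinearMap† ∘L V.toContinuousLinearMap, ?_, ?_⟩
  · ext ⟨s, t⟩
    simp [matrixEntries, adjoint_inner_right, hV, hW, inner_v, diagBlock]
  · calc _ ≤ ‖W.toContinuousLinearMap†‖ * ‖V.toContinuousLinearMap‖ := opNorm_comp_le _ _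
      _ ≤ 1 * 1 := by
        rw [LinearIsometryEquiv.norm_map]
        gcongr <;> exact LinearIsometry.norm_toContinuousLinearMap_le _
      _ = 1 := one_mul 1

lemma isSchurMultiplier_one_iff_posSemidef :
    IsSchurMultiplier ψ 1 ↔
      ∀ φ, (diagBlock 1 φ).PosSemidef → (diagBlock 1 (ψ * φ)).PosSemidef := by
  rw [isSchurMultiplier_iff_matrixEntries]
  constructor
  · intro hψ φ hφ
    obtain ⟨A, rfl, hA⟩ := exists_matrixEntries_eq hφ
    obtain ⟨B, hB, hBA⟩ := hψ A
    exact hB ▸ posSemidef_diagBlock_matrixEntries (hBA.trans (by rwa [one_mul]))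
  · intro hψ A
    rcases eq_or_ne A 0 with rfl | hA
    · exact ⟨0, by ext; simp [matrixEntries], by simp⟩
    have norm_ne_zero : (‖A‖ : ℂ) ≠ 0 := by simpa
    obtain ⟨B, hB, hB1⟩ := exists_matrixEntries_eq <| hψ _ <|
      posSemidef_diagBlock_matrixEntries (norm_smul_inv_norm (𝕜 := ℂ) hA).le
    refine ⟨(‖A‖ : ℂ) • B, ?_, ?_⟩
    · rw [matrixEntries_smul, hB, matrixEntries_smul, mul_smul_comm]
      exact smul_inv_smul₀ norm_ne_zero _
    · rw [norm_smul, mul_comm]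
      gcongr
      simp

lemma IsSchurMultiplier.posSemidef_diagBlock_mul (hψ : IsSchurMultiplier ψ 1)
    (h : (diagBlock d φ).PosSemidef) : (diagBlock d (ψ * φ)).PosSemidef := by
  rw [isSchurMultiplier_one_iff_posSemidef] at hψ
  have d_nonneg (i : S ⊕ T) : 0 ≤ d i := by
    simpa [diagBlock_apply_self] using h.diag_nonneg (i := i)
  have φ_eq_zero (s : S) (t : T) (hd : d (.inl s) = 0 ∨ d (.inr t) = 0) : φ (s, t) = 0 := by
    have norm_sq_le := norm_apply_sq_le h (.inl s) (.inr t)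
    simp only [diagBlock_apply_self, diagBlock_apply_inl_inr] at norm_sq_le
    rcases hd with hd | hd <;> simpa [hd, sq_nonpos_iff] using norm_sq_le
  -- Entries where `d` vanishes are lost in the rescaling, as `(√0)⁻¹ = 0`, but `φ` vanishes there.
  have rescaled := posSemidef_diagBlock_mono (d' := 1) (fun i ↦ ?_)
    (posSemidef_diagBlock_rescale (fun i ↦ (√(d i))⁻¹) h)
  · convert! posSemidef_diagBlock_rescale (fun i ↦ √(d i)) (hψ _ rescaled) using 2
    · ext i
      simp [d_nonneg]
    · ext ⟨s, t⟩
      by_cases hd : d (.inl s) = 0 ∨ d (.inr t) = 0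
      · simp [φ_eq_zero s t hd]
      · push Not at hd
        have hs : (√(d (.inl s)) : ℂ) ≠ 0 := by simpa [Real.sqrt_eq_zero (d_nonneg _)] using hd.1
        have ht : (√(d (.inr t)) : ℂ) ≠ 0 := by simpa [Real.sqrt_eq_zero (d_nonneg _)] using hd.2
        simp only [Pi.mul_apply, Complex.ofReal_inv]
        field_simp
  · simp [d_nonneg, inv_mul_le_one]

lemma sum_diagBlock (x : S ⊕ T →₀ ℂ) :
    (x.sum fun i xi ↦ x.sum fun j xj ↦ star xi * diagBlock d φ i j * xj) =
      ((∑ i ∈ x.support, d i * ‖x i‖ ^ 2 + 2 * (∑ p ∈ x.support.toLeft ×ˢ x.support.toRight,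
        φ p * (star (x (.inl p.1)) * x (.inr p.2))).re : ℝ) : ℂ) := by
  have star_mul_mul_self (a : ℝ) (z : ℂ) : star z * a * z = ((a * ‖z‖ ^ 2 : ℝ) : ℂ) := by
    rw [mul_right_comm, ← starRingEnd_apply, Complex.conj_mul', mul_comm]
    norm_cast
  set z := ∑ p ∈ x.support.toLeft ×ˢ x.support.toRight, φ p * (star (x (.inl p.1)) * x (.inr p.2))
    with hz
  have upper_sum : ∑ s ∈ x.support.toLeft, ∑ t ∈ x.support.toRight,
      star (x (.inl s)) * φ (s, t) * x (.inr t) = z := by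
    rw [hz, Finset.sum_product]
    simp only [mul_assoc, mul_left_comm]
  have lower_sum : ∑ t ∈ x.support.toRight, ∑ s ∈ x.support.toLeft,
      star (x (.inr t)) * star (φ (s, t)) * x (.inl s) = star z := by
    rw [← upper_sum, Finset.sum_comm]
    simp only [star_sum, star_mul, star_star, mul_assoc]
  simp only [Finsupp.sum, Finset.sum_sum_eq_sum_toLeft_add_sum_toRight, diagBlock,
    fromBlocks_apply₁₁, fromBlocks_apply₁₂, fromBlocks_apply₂₁, fromBlocks_apply₂₂, diagonal_apply,
    conjTranspose_apply, of_apply, Finset.sum_add_distrib, upper_sum, lower_sum, mul_ite, ite_mul,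
    mul_zero, zero_mul, Finset.sum_ite_eq, Finset.sum_ite_mem, Finset.inter_self,
    star_mul_mul_self]
  have := Complex.add_conj z
  push_cast at this ⊢
  rw [← this, starRingEnd_apply]
  ring

lemma posSemidef_diagBlock_iff :
    (diagBlock d φ).PosSemidef ↔ ∀ x : S ⊕ T →₀ ℂ,
      0 ≤ ∑ i ∈ x.support, d i * ‖x i‖ ^ 2 + 2 * (∑ p ∈ x.support.toLeft ×ˢ x.support.toRight,
        φ p * (star (x (.inl p.1)) * x (.inr p.2))).re := by
  refine ⟨fun h x ↦ ?_, fun h ↦ ⟨?_, fun x ↦ ?_⟩⟩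
  · simpa only [sum_diagBlock, Complex.zero_le_real] using h.2 x
  · simp [diagBlock, IsHermitian, fromBlocks_conjTranspose, diagonal_conjTranspose, Pi.star_def]
  · simpa only [sum_diagBlock, Complex.zero_le_real] using h x

end DiagBlock

section GramCone

open Filter Topology

variable {S T : Type*}

variable (S T) in
/-- The cone of pairs `(d, φ)` such that `φ` is the off-diagonal block of a positive semidefinite
kernel on `S ⊕ T` with diagonal at most `d`; equivalently `φ (s, t) = ⟪x s, y t⟫` for vectors with
`‖x s‖ ^ 2 ≤ d s` and `‖y t‖ ^ 2 ≤ d t`. -/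
def gramCone : PointedCone ℝ ((S ⊕ T → ℝ) × (S × T → ℂ)) where
  carrier := {a | ∃ P : Matrix (S ⊕ T) (S ⊕ T) ℂ, P.PosSemidef ∧
    (∀ i, (P i i).re ≤ a.1 i) ∧ ∀ s t, P (.inl s) (.inr t) = a.2 (s, t)}
  zero_mem' := ⟨0, .zero, by simp, by simp⟩
  add_mem' := by
    rintro _ _ ⟨P, hP, hPd, hPφ⟩ ⟨Q, hQ, hQd, hQφ⟩
    exact ⟨P + Q, hP.add hQ, fun i ↦ add_le_add (hPd i) (hQd i), by simp [hPφ, hQφ]⟩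
  smul_mem' := by
    rintro ⟨c, hc⟩ _ ⟨P, hP, hPd, hPφ⟩
    refine ⟨c • P, hP.smul hc, fun i ↦ ?_, by simp [hPφ]⟩
    simpa using mul_le_mul_of_nonneg_left (hPd i) hc

lemma mem_gramCone {a : (S ⊕ T → ℝ) × (S × T → ℂ)} :
    a ∈ gramCone S T ↔ ∃ P : Matrix (S ⊕ T) (S ⊕ T) ℂ, P.PosSemidef ∧
      (∀ i, (P i i).re ≤ a.1 i) ∧ ∀ s t, P (.inl s) (.inr t) = a.2 (s, t) :=
  Iff.rfl

lemma exists_tendsto_apply_of_posSemidef {α ι 𝕜 : Type*} [RCLike 𝕜] {u : Ultrafilter α}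
    {P : α → Matrix ι ι 𝕜} {r : ι → ℝ} (hP : ∀ᶠ b in u, (P b).PosSemidef)
    (hr : ∀ i, ∀ᶠ b in u, RCLike.re (P b i i) ≤ r i) (i j : ι) :
    ∃ z, Tendsto (fun b ↦ P b i j) u (𝓝 z) := by
  have mem_closedBall : ∀ᶠ b in u, P b i j ∈ Metric.closedBall 0 √(r i * r j) := by
    filter_upwards [hP, hr i, hr j] with b hb hi hj
    have re_nonneg (k : ι) : 0 ≤ RCLike.re (P b k k) := (RCLike.nonneg_iff.1 hb.diag_nonneg).1
    rw [mem_closedBall_zero_iff]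
    exact Real.le_sqrt_of_sq_le <| (norm_apply_sq_le hb i j).trans <|
      mul_le_mul hi hj (re_nonneg j) ((re_nonneg i).trans hi)
  obtain ⟨z, -, hz⟩ := (isCompact_closedBall _ _).ultrafilter_le_nhds' (u.map fun b ↦ P b i j)
    mem_closedBall
  exact ⟨z, hz⟩

lemma isClosed_gramCone : IsClosed (gramCone S T : Set ((S ⊕ T → ℝ) × (S × T → ℂ))) := by
  rw [isClosed_iff_ultrafilter]
  rintro ⟨d, φ⟩ u hu mem_u
  have h_mem : ∀ᶠ b in u, b ∈ gramCone S T := mem_u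
  choose! P hP hPd hPφ using fun a (ha : a ∈ gramCone S T) ↦ mem_gramCone.1 ha
  have tendsto_fst (i : S ⊕ T) : Tendsto (fun b : (S ⊕ T → ℝ) × (S × T → ℂ) ↦ b.1 i) u
      (𝓝 (d i)) :=
    tendsto_pi_nhds.1 ((continuous_fst.tendsto _).mono_left hu) i
  have tendsto_snd (p : S × T) : Tendsto (fun b : (S ⊕ T → ℝ) × (S × T → ℂ) ↦ b.2 p) u
      (𝓝 (φ p)) :=
    tendsto_pi_nhds.1 ((continuous_snd.tendsto _).mono_left hu) p
  have diag_le (i : S ⊕ T) : ∀ᶠ b in u, (P b i i).re ≤ d i + 1 := by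
    filter_upwards [h_mem, (tendsto_fst i).eventually_le_const (lt_add_one _)] with b hb hi
    exact (hPd b hb i).trans hi
  choose Q hQ using exists_tendsto_apply_of_posSemidef (h_mem.mono hP) diag_le
  refine mem_gramCone.2 ⟨of Q, ?_, fun i ↦ ?_, fun s t ↦ ?_⟩
  · exact isClosed_setOf_posSemidef.mem_of_tendsto
      (tendsto_pi_nhds.2 fun i ↦ tendsto_pi_nhds.2 (hQ i)) (h_mem.mono hP)
  · exact le_of_tendsto_of_tendsto ((Complex.continuous_re.tendsto _).comp (hQ i i)) (tendsto_fst i)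
      (h_mem.mono fun b hb ↦ hPd b hb i)
  · exact tendsto_nhds_unique_of_eventuallyEq (hQ _ _) (tendsto_snd (s, t))
      (h_mem.mono fun b hb ↦ hPφ b hb s t)

lemma sq_norm_mem_gramCone (x : S ⊕ T → ℂ) :
    (fun i ↦ ‖x i‖ ^ 2, fun p ↦ star (x (.inl p.1)) * x (.inr p.2)) ∈ gramCone S T :=
  mem_gramCone.2 ⟨gram ℂ x, gram_posSemidef x,
    fun i ↦ (inner_self_eq_norm_sq (𝕜 := ℂ) (x i)).le, by simp [mul_comm]⟩

lemma isSchurMultiplier_one_of_mem_gramCone {ψ : S × T → ℂ} (h : (1, ψ) ∈ gramCone S T) :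
    IsSchurMultiplier ψ 1 := by
  classical
  obtain ⟨P, hP, hP_diag, hPψ⟩ := mem_gramCone.1 h
  refine isSchurMultiplier_one_iff_posSemidef.2 fun φ hφ ↦ ?_
  have h := hP.hadamard hφ
  simp only [hadamard_diagBlock hP.isHermitian, hPψ] at h
  exact posSemidef_diagBlock_mono (fun i ↦ by simpa using hP_diag i) h

lemma exists_apply_sq_norm_eq_sum (f : (S ⊕ T → ℝ) × (S × T → ℂ) →ₗ[ℝ] ℝ) :
    ∃ (l : S ⊕ T → ℝ) (c : S × T → ℂ), ∀ (χ : S × T → ℂ) (x : S ⊕ T →₀ ℂ),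
      f (fun i ↦ ‖x i‖ ^ 2, fun p ↦ χ p * (star (x (.inl p.1)) * x (.inr p.2))) =
        ∑ i ∈ x.support, l i * ‖x i‖ ^ 2 +
          2 * (∑ p ∈ x.support.toLeft ×ˢ x.support.toRight,
            (χ * c) p * (star (x (.inl p.1)) * x (.inr p.2))).re := by
  obtain ⟨l, c, hlc⟩ := exists_eq_sum_add_re_sum f
  refine ⟨l, 2⁻¹ * c, fun χ x ↦ ?_⟩
  rw [hlc x.support (x.support.toLeft ×ˢ x.support.toRight)]
  · congr 1
    rw [← Complex.re_ofReal_mul, Finset.mul_sum]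
    congr! 2 with p
    simp only [Pi.mul_apply, Pi.inv_apply, Pi.ofNat_apply, Complex.ofReal_ofNat]
    ring
  · intro
    simp
  · intro
    simp

lemma IsSchurMultiplier.nonneg_of_forall_mem_gramCone {ψ : S × T → ℂ}
    (hψ : IsSchurMultiplier ψ 1) {f : (S ⊕ T → ℝ) × (S × T → ℂ) →ₗ[ℝ] ℝ}
    (hf : ∀ a ∈ gramCone S T, 0 ≤ f a) (x : S ⊕ T →₀ ℂ) :
    0 ≤ f (fun i ↦ ‖x i‖ ^ 2, fun p ↦ ψ p * (star (x (.inl p.1)) * x (.inr p.2))) := by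
  classical
  obtain ⟨l, c, f_eq⟩ := exists_apply_sq_norm_eq_sum f
  have hlc : (diagBlock l c).PosSemidef := by
    refine posSemidef_diagBlock_iff.2 fun y ↦ ?_
    have f_rankOne := f_eq 1 y
    simp only [Pi.one_apply, one_mul] at f_rankOne
    exact f_rankOne ▸ hf _ (sq_norm_mem_gramCone y)
  rw [f_eq]
  exact posSemidef_diagBlock_iff.1 (hψ.posSemidef_diagBlock_mul hlc) x

lemma IsSchurMultiplier.mem_gramCone {ψ : S × T → ℂ} (hψ : IsSchurMultiplier ψ 1) :
    (1, ψ) ∈ gramCone S T := by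
  classical
  let C : ProperCone ℝ ((S ⊕ T → ℝ) × (S × T → ℂ)) := ⟨gramCone S T, isClosed_gramCone⟩
  by_contra h_notMem
  obtain ⟨f, hf, hf_neg⟩ := C.hyperplane_separation_point h_notMem
  let a (F : Finset (S ⊕ T)) : (S ⊕ T → ℝ) × (S × T → ℂ) :=
    let x : S ⊕ T →₀ ℂ := Finsupp.indicator F fun _ _ ↦ 1
    (fun i ↦ ‖x i‖ ^ 2, fun p ↦ ψ p * (star (x (.inl p.1)) * x (.inr p.2)))
  have tendsto_a : Tendsto a atTop (𝓝 (1, ψ)) := by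
    refine Tendsto.prodMk_nhds (tendsto_pi_nhds.2 fun i ↦ ?_) (tendsto_pi_nhds.2 fun p ↦ ?_)
    · refine tendsto_const_nhds.congr' ?_
      filter_upwards [eventually_ge_atTop {i}] with F hF
      simp_all
    · refine tendsto_const_nhds.congr' ?_
      filter_upwards [eventually_ge_atTop {.inl p.1, .inr p.2}] with F hF
      simp_all [Finset.insert_subset_iff]
  exact hf_neg.not_ge <| ge_of_tendsto' ((f.continuous.tendsto _).comp tendsto_a)
    fun F ↦ hψ.nonneg_of_forall_mem_gramCone (f := f) hf _

end GramCone

/-- `ψ` is a Schur multiplier of norm at most 1 iff there are vectors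
`x : S → K`, `y : T → K` in the Hilbert space `K = ℓ²(S ⊕ T)` with `‖x s‖ ≤ 1`,
`‖y t‖ ≤ 1` and `ψ(s,t) = ⟪x s, y t⟫`. -/
theorem stmt_0 {S T : Type*} (ψ : S × T → ℂ) :
    IsSchurMultiplier ψ 1 ↔
      ∃ (x : S → lp (fun _ : S ⊕ T => ℂ) 2) (y : T → lp (fun _ : S ⊕ T => ℂ) 2),
        (∀ s, ‖x s‖ ≤ 1) ∧ (∀ t, ‖y t‖ ≤ 1) ∧
        ∀ s t, ψ (s, t) = inner (𝕜 := ℂ) (x s) (y t) := by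
  constructor
  · intro hψ
    obtain ⟨P, hP, hP_diag, hPψ⟩ := mem_gramCone.1 hψ.mem_gramCone
    obtain ⟨v, rfl⟩ := exists_gram_lp_eq hP
    have norm_le_one (i : S ⊕ T) : ‖v i‖ ≤ 1 := re_gram_apply_self_le_one_iff.1 (hP_diag i)
    exact ⟨fun s ↦ v (.inl s), fun t ↦ v (.inr t), fun s ↦ norm_le_one _, fun t ↦ norm_le_one _,
      fun s t ↦ (hPψ s t).symm⟩
  · rintro ⟨x, y, hx, hy, hψ⟩
    refine isSchurMultiplier_one_of_mem_gramCone <| mem_gramCone.2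
      ⟨gram ℂ (Sum.elim x y), gram_posSemidef _, fun i ↦ re_gram_apply_self_le_one_iff.2 ?_,
        fun s t ↦ (hψ s t).symm⟩
    cases i with
    | inl s => exact hx s
    | inr t => exact hy t
end
end

section
/- Let S and T be sets and let ψ : S × T → ℂ. The following are equivalent: (a) there exist a constant C and a partition S × T = Γ₁ ∪ Γ₂ (Γ₁ ∩ Γ₂ = ∅) such that sup_{s∈S} Σ_{t : (s,t)∈Γ₁} |ψ(s,t)|² ≤ C² and sup_{t∈T} Σ_{s : (s,t)∈Γ₂} |ψ(s,t)|² ≤ C²; (b) there exists a constant C such that for every N ≥ 1 and all finite subsets E ⊆ S, F ⊆ T with |E| = |F| = N one has Σ_{(s,t)∈E×F} |ψ(s,t)|² ≤ C² N. -/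
open scoped ENNReal NNReal
open MeasureTheory ContinuousLinearMap

noncomputable section

/-!
The constants are `C` from (b) to (a) and `√2 * C` from (a) to (b).

For (b) ⇒ (a), put `w = |ψ|²` and `K = C²`. A nonempty finite rectangle with at least as many
columns as rows contains a square using all of its rows; by (b) the average column sum of that
square is at most `K`, so some column of the rectangle has sum at most `K`. Symmetrically, a
rectangle with at least as many rows as columns has a row of sum at most `K`. Removing such rows
and columns one after another splits any finite rectangle: the removed rows go to `Γ₁`, the removed
columns to `Γ₂`. Rado's selection lemma glues the splittings of the finite rectangles into one of
`S × T`.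
-/

/-- The partition condition (a) for a weight `w` in place of `|ψ|²` and a bound `K` in place
of `C²`. -/
def HasBoundedSplit {S T : Type*} (w : S × T → ℝ≥0∞) (K : ℝ≥0∞) : Prop :=
  ∃ Γ₁ Γ₂ : Set (S × T), Γ₁ ∪ Γ₂ = Set.univ ∧ Disjoint Γ₁ Γ₂ ∧
    (∀ s, ∑' t, Γ₁.indicator w (s, t) ≤ K) ∧ (∀ t, ∑' s, Γ₂.indicator w (s, t) ≤ K)

/-- The combinatorial condition (b) for a weight `w` in place of `|ψ|²` and a bound `K` in place
of `C²`. -/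
def IsSquareBounded {S T : Type*} (w : S × T → ℝ≥0∞) (K : ℝ≥0∞) : Prop :=
  ∀ N : ℕ, 1 ≤ N → ∀ (E : Finset S) (F : Finset T), E.card = N → F.card = N →
    ∑ p ∈ E ×ˢ F, w p ≤ K * N

/-- The partition condition (a) on a finite rectangle `E × F`, with `Γ` in the role of `Γ₁` and its
complement in the role of `Γ₂`. -/
def IsSplitOn {S T M : Type*} [AddCommMonoid M] [LE M] (w : S × T → M) (c : M)
    (E : Finset S) (F : Finset T) (Γ : Set (S × T)) : Prop :=
  (∀ s ∈ E, ∑ t ∈ F, Γ.indicator w (s, t) ≤ c) ∧ (∀ t ∈ F, ∑ s ∈ E, Γᶜ.indicator w (s, t) ≤ c)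

namespace IsSplitOn

variable {S T M : Type*} [AddCommMonoid M] {w : S × T → M} {c : M} {E E' : Finset S}
  {F F' : Finset T} {Γ Γ' : Set (S × T)}

lemma congr [LE M] (h : IsSplitOn w c E F Γ) (hΓ : ∀ p ∈ E ×ˢ F, p ∈ Γ' ↔ p ∈ Γ) :
    IsSplitOn w c E F Γ' := by
  classical
  refine ⟨fun s hs ↦ (Finset.sum_congr rfl fun t ht ↦ ?_).trans_le (h.1 s hs),
    fun t ht ↦ (Finset.sum_congr rfl fun s hs ↦ ?_).trans_le (h.2 t ht)⟩ <;>
    simp [Set.indicator_apply, hΓ (s, t) (Finset.mk_mem_product hs ht)]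

lemma insert_row [LE M] [DecidableEq S] {s : S} (h : IsSplitOn w c E F Γ) (hsE : s ∉ E)
    (hs : ∑ t ∈ F, w (s, t) ≤ c) :
    IsSplitOn w c (insert s E) F (Γ ∪ {p | p.1 = s}) := by
  have hne : ∀ s' ∈ E, s' ≠ s := fun s' hs' ↦ ne_of_mem_of_not_mem hs' hsE
  have hE : IsSplitOn w c E F (Γ ∪ {p | p.1 = s}) := h.congr fun p hp ↦ by
    simp [hne p.1 (Finset.mem_product.1 hp).1]
  refine ⟨Finset.forall_mem_insert _ _ _ |>.2 ⟨by simpa [Set.indicator_apply] using hs, hE.1⟩,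
    fun t ht ↦ ?_⟩
  rw [Finset.sum_insert hsE, Set.indicator_of_notMem (by simp), zero_add]
  exact hE.2 t ht

lemma insert_column [LE M] [DecidableEq T] {t : T} (h : IsSplitOn w c E F Γ) (htF : t ∉ F)
    (ht : ∑ s ∈ E, w (s, t) ≤ c) :
    IsSplitOn w c E (insert t F) (Γ \ {p | p.2 = t}) := by
  have hne : ∀ t' ∈ F, t' ≠ t := fun t' ht' ↦ ne_of_mem_of_not_mem ht' htF
  have hF : IsSplitOn w c E F (Γ \ {p | p.2 = t}) := h.congr fun p hp ↦ by
    simp [hne p.2 (Finset.mem_product.1 hp).2]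
  refine ⟨fun s hs ↦ ?_,
    Finset.forall_mem_insert _ _ _ |>.2 ⟨by simpa [Set.indicator_apply] using ht, hF.2⟩⟩
  rw [Finset.sum_insert htF, Set.indicator_of_notMem (by simp), zero_add]
  exact hF.1 s hs

lemma mono [PartialOrder M] [CanonicallyOrderedAdd M] (h : IsSplitOn w c E' F' Γ) (hE : E ⊆ E')
    (hF : F ⊆ F') : IsSplitOn w c E F Γ :=
  ⟨fun s hs ↦ (Finset.sum_le_sum_of_subset hF).trans (h.1 s (hE hs)),
    fun t ht ↦ (Finset.sum_le_sum_of_subset hE).trans (h.2 t (hF ht))⟩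

end IsSplitOn

section Splitting

variable {S T M : Type*} [AddCommMonoid M] [PartialOrder M] [CanonicallyOrderedAdd M]
  {w : S × T → M} {c : M}

theorem exists_isSplitOn_of_exists_row_or_column_le
    (h : ∀ (E : Finset S) (F : Finset T), E.Nonempty → F.Nonempty →
      (∃ s ∈ E, ∑ t ∈ F, w (s, t) ≤ c) ∨ ∃ t ∈ F, ∑ s ∈ E, w (s, t) ≤ c)
    (E : Finset S) (F : Finset T) : ∃ Γ, IsSplitOn w c E F Γ := by
  classical
  induction hn : E.card + F.card generalizing E F with
  | zero => exact ⟨∅, by simp_all [IsSplitOn]⟩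
  | succ n ih =>
    rcases E.eq_empty_or_nonempty with rfl | hE
    · exact ⟨∅, by simp [IsSplitOn]⟩
    rcases F.eq_empty_or_nonempty with rfl | hF
    · exact ⟨∅, by simp [IsSplitOn]⟩
    rcases h E F hE hF with ⟨s, hs, hsum⟩ | ⟨t, ht, hsum⟩
    · obtain ⟨Γ, hΓ⟩ := ih (E.erase s) F (by have := Finset.card_erase_add_one hs; omega)
      exact ⟨_, Finset.insert_erase hs ▸ hΓ.insert_row (Finset.notMem_erase s E) hsum⟩
    · obtain ⟨Γ, hΓ⟩ := ih E (F.erase t) (by have := Finset.card_erase_add_one ht; omega)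
      exact ⟨_, Finset.insert_erase ht ▸ hΓ.insert_column (Finset.notMem_erase t F) hsum⟩

theorem exists_forall_isSplitOn
    (h : ∀ (E : Finset S) (F : Finset T), ∃ Γ, IsSplitOn w c E F Γ) :
    ∃ Γ, ∀ (E : Finset S) (F : Finset T), IsSplitOn w c E F Γ := by
  classical
  choose g hg using h
  obtain ⟨Γ, hΓ⟩ := Finset.rado_selection
    fun (A : Finset (S × T)) p ↦ p ∈ g (A.image Prod.fst) (A.image Prod.snd)
  refine ⟨{p | Γ p}, fun E F ↦ ?_⟩
  rcases (E ×ˢ F).eq_empty_or_nonempty with hEF | hEF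
  · rcases Finset.product_eq_empty.1 hEF with rfl | rfl <;> simp [IsSplitOn]
  obtain ⟨hE, hF⟩ := Finset.nonempty_product.1 hEF
  obtain ⟨A, hA, hΓA⟩ := hΓ (E ×ˢ F)
  have hEA : E ⊆ A.image Prod.fst := by
    simpa only [Finset.product_image_fst hF] using Finset.image_subset_image (f := Prod.fst) hA
  have hFA : F ⊆ A.image Prod.snd := by
    simpa only [Finset.product_image_snd hE] using Finset.image_subset_image (f := Prod.snd) hA
  exact ((hg _ _).mono hEA hFA).congr fun p hp ↦ (hΓA p hp).to_iff

end Splitting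

section SquareBounded

variable {S T : Type*} {w : S × T → ℝ≥0∞} {K : ℝ≥0∞}

namespace IsSquareBounded

lemma swap (h : IsSquareBounded w K) : IsSquareBounded (w ∘ Prod.swap) K := by
  intro N hN F E hF hE
  rw [Finset.sum_product_right]
  simpa only [Finset.sum_product, Function.comp_apply, Prod.swap_prod_mk] using h N hN E F hE hF

lemma exists_column_le (h : IsSquareBounded w K) {E : Finset S} {F : Finset T} (hE : E.Nonempty)
    (hEF : E.card ≤ F.card) : ∃ t ∈ F, ∑ s ∈ E, w (s, t) ≤ K := by
  by_contra! hlt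
  obtain ⟨F', hF'F, hF'⟩ := Finset.exists_subset_card_eq hEF
  have hF'ne : F'.Nonempty := Finset.card_pos.1 (hF' ▸ hE.card_pos)
  refine (h E.card hE.card_pos E F' rfl hF').not_gt ?_
  calc K * E.card = ∑ _t ∈ F', K := by simp [hF', mul_comm]
    _ < ∑ t ∈ F', ∑ s ∈ E, w (s, t) :=
      ENNReal.sum_lt_sum_of_nonempty hF'ne fun t ht ↦ hlt t (hF'F ht)
    _ = ∑ p ∈ E ×ˢ F', w p := (Finset.sum_product_right ..).symm

lemma exists_row_or_column_le (h : IsSquareBounded w K) {E : Finset S} {F : Finset T}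
    (hE : E.Nonempty) (hF : F.Nonempty) :
    (∃ s ∈ E, ∑ t ∈ F, w (s, t) ≤ K) ∨ ∃ t ∈ F, ∑ s ∈ E, w (s, t) ≤ K :=
  (le_total F.card E.card).imp (h.swap.exists_column_le hF) (h.exists_column_le hE)

theorem hasBoundedSplit (h : IsSquareBounded w K) : HasBoundedSplit w K := by
  obtain ⟨Γ, hΓ⟩ := exists_forall_isSplitOn <| exists_isSplitOn_of_exists_row_or_column_le
    fun _ _ ↦ h.exists_row_or_column_le
  exact ⟨Γ, Γᶜ, Set.union_compl_self Γ, disjoint_compl_right,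
    fun s ↦ ENNReal.summable.tsum_le_of_sum_le fun F ↦ (hΓ {s} F).1 s (Finset.mem_singleton_self s),
    fun t ↦ ENNReal.summable.tsum_le_of_sum_le fun E ↦ (hΓ E {t}).2 t (Finset.mem_singleton_self t)⟩

end IsSquareBounded

theorem HasBoundedSplit.isSquareBounded (h : HasBoundedSplit w K) :
    IsSquareBounded w (2 * K) := by
  obtain ⟨Γ₁, Γ₂, hunion, hdisj, hrow, hcol⟩ := h
  intro N _ E F hE hF
  have hw : w = fun p ↦ Γ₁.indicator w p + Γ₂.indicator w p := by
    simpa only [hunion, Set.indicator_univ] using Set.indicator_union_of_disjoint hdisj w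
  calc ∑ p ∈ E ×ˢ F, w p
      = ∑ s ∈ E, ∑ t ∈ F, Γ₁.indicator w (s, t) + ∑ t ∈ F, ∑ s ∈ E, Γ₂.indicator w (s, t) := by
        rw [← Finset.sum_product, ← Finset.sum_product_right, ← Finset.sum_add_distrib]
        exact Finset.sum_congr rfl fun p _ ↦ congrFun hw p
    _ ≤ ∑ _s ∈ E, K + ∑ _t ∈ F, K := by
        gcongr with s _ t _
        · exact (ENNReal.sum_le_tsum F).trans (hrow s)
        · exact (ENNReal.sum_le_tsum E).trans (hcol t)
    _ = 2 * K * N := by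
        simp only [Finset.sum_const, hE, hF, nsmul_eq_mul]
        ring

end SquareBounded

theorem stmt_2_general {S T : Type*} (w : S × T → ℝ≥0∞) :
    (∃ K ≠ ∞, HasBoundedSplit w K) ↔ ∃ K ≠ ∞, IsSquareBounded w K :=
  ⟨fun ⟨K, hK, h⟩ ↦ ⟨2 * K, ENNReal.mul_ne_top ENNReal.ofNat_ne_top hK, h.isSquareBounded⟩,
    fun ⟨K, hK, h⟩ ↦ ⟨K, hK, h.hasBoundedSplit⟩⟩

lemma exists_ofReal_sq_iff {p : ℝ≥0∞ → Prop} :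
    (∃ C : ℝ, p (ENNReal.ofReal (C ^ 2))) ↔ ∃ K ≠ ∞, p K := by
  refine ⟨fun ⟨C, hC⟩ ↦ ⟨_, ENNReal.ofReal_ne_top, hC⟩, fun ⟨K, hK, hpK⟩ ↦ ⟨√K.toReal, ?_⟩⟩
  rwa [Real.sq_sqrt ENNReal.toReal_nonneg, ENNReal.ofReal_toReal hK]

lemma sum_norm_sq_le_sq_mul_iff {ι E : Type*} [SeminormedAddCommGroup E] (f : ι → E)
    (s : Finset ι) (C : ℝ) (N : ℕ) :
    ∑ i ∈ s, ‖f i‖ ^ 2 ≤ C ^ 2 * N ↔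
      ∑ i ∈ s, (‖f i‖₊ : ℝ≥0∞) ^ 2 ≤ ENNReal.ofReal (C ^ 2) * N := by
  have hsum : ∑ i ∈ s, (‖f i‖₊ : ℝ≥0∞) ^ 2 = ENNReal.ofReal (∑ i ∈ s, ‖f i‖ ^ 2) := by
    rw [ENNReal.ofReal_sum_of_nonneg fun i _ ↦ sq_nonneg ‖f i‖]
    exact Finset.sum_congr rfl fun i _ ↦ by
      rw [ENNReal.ofReal_pow (norm_nonneg _), ofReal_norm, enorm_eq_nnnorm]
  rw [hsum, ← ENNReal.ofReal_natCast, ← ENNReal.ofReal_mul (sq_nonneg C),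
    ENNReal.ofReal_le_ofReal_iff (by positivity)]

/-- Varopoulos: the partition condition (a) is equivalent to the
combinatorial condition (b) on rectangles `E × F` with `|E| = |F| = N`. -/
theorem stmt_2 {S T : Type*} (ψ : S × T → ℂ) :
    (∃ (C : ℝ) (Γ₁ Γ₂ : Set (S × T)), Γ₁ ∪ Γ₂ = Set.univ ∧ Disjoint Γ₁ Γ₂ ∧
      (∀ s : S, (∑' t : T, Γ₁.indicator (fun p => (‖ψ p‖₊ : ℝ≥0∞) ^ 2) (s, t))
          ≤ ENNReal.ofReal (C ^ 2)) ∧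
      (∀ t : T, (∑' s : S, Γ₂.indicator (fun p => (‖ψ p‖₊ : ℝ≥0∞) ^ 2) (s, t))
          ≤ ENNReal.ofReal (C ^ 2))) ↔
    (∃ C : ℝ, ∀ N : ℕ, 1 ≤ N → ∀ (E : Finset S) (F : Finset T),
      E.card = N → F.card = N →
      ∑ p ∈ E ×ˢ F, ‖ψ p‖ ^ 2 ≤ C ^ 2 * N) := by
  simpa only [← exists_ofReal_sq_iff, HasBoundedSplit, IsSquareBounded,
    sum_norm_sq_le_sq_mul_iff] using stmt_2_general fun p ↦ (‖ψ p‖₊ : ℝ≥0∞) ^ 2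
end
end

section
/- Let S and T be sets, let ψ : S × T → ℂ and suppose ψ = ψ₁ + ψ₂ where sup_{s∈S} Σ_{t∈T} |ψ₁(s,t)|² ≤ C₁² and sup_{t∈T} Σ_{s∈S} |ψ₂(s,t)|² ≤ C₂². Then for every function ε : S × T → ℂ with |ε(s,t)| ≤ 1 for all (s,t), the pointwise product (s,t) ↦ ε(s,t)·ψ(s,t) is a Schur multiplier of norm at most C₁ + C₂. -/
open scoped ENNReal NNReal
open MeasureTheory ContinuousLinearMap

noncomputable section

/-!
A multiplier whose columns are square-summable is handled directly: by Cauchy–Schwarz in `s`,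
`|∑ₛ φ(s,t) A(s,t) xₛ|² ≤ (∑ₛ |φ(s,t)|²) (∑ₛ |A(s,t)|² |xₛ|²)`, and summing over `t` leaves
`C² ∑ₛ |xₛ|² ‖A eₛ‖² ≤ (C ‖A‖ ‖x‖)²`. Taking adjoints exchanges rows and columns. Both hypotheses
only concern absolute values, so they survive multiplication by `ε`.
-/

section SquareSums

lemma sq_tsum_mul_le_tsum_sq_mul_tsum_sq {ι : Type*} (f g : ι → ℝ≥0∞) :
    (∑' i, f i * g i) ^ 2 ≤ (∑' i, f i ^ 2) * ∑' i, g i ^ 2 := by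
  let : MeasurableSpace ι := ⊤
  have holder : ∑' i, f i * g i ≤
      (∑' i, f i ^ 2) ^ (1 / 2 : ℝ) * (∑' i, g i ^ 2) ^ (1 / 2 : ℝ) := by
    simpa [lintegral_count] using ENNReal.lintegral_mul_le_Lp_mul_Lq Measure.count
      Real.HolderConjugate.two_two (measurable_from_top (f := f)).aemeasurable
      (measurable_from_top (f := g)).aemeasurable
  calc (∑' i, f i * g i) ^ 2
      ≤ ((∑' i, f i ^ 2) ^ (1 / 2 : ℝ) * (∑' i, g i ^ 2) ^ (1 / 2 : ℝ)) ^ 2 := by gcongr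
    _ = (∑' i, f i ^ 2) * ∑' i, g i ^ 2 := by
      simp only [mul_pow, ← ENNReal.rpow_mul_natCast, Nat.cast_ofNat, one_div, ne_eq,
        OfNat.ofNat_ne_zero, not_false_eq_true, inv_mul_cancel₀, ENNReal.rpow_one]

lemma tsum_sq_tsum_mul_mul_le {S T : Type*} {φ a : S → T → ℝ≥0∞} {C D : ℝ≥0∞}
    (hφ : ∀ t, ∑' s, φ s t ^ 2 ≤ C) (ha : ∀ s, ∑' t, a s t ^ 2 ≤ D) (x : S → ℝ≥0∞) :
    ∑' t, (∑' s, φ s t * a s t * x s) ^ 2 ≤ C * D * ∑' s, x s ^ 2 :=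
  calc ∑' t, (∑' s, φ s t * a s t * x s) ^ 2
      ≤ ∑' t, C * ∑' s, (a s t * x s) ^ 2 := by
        refine ENNReal.tsum_le_tsum fun t ↦ ?_
        simp only [mul_assoc]
        exact (sq_tsum_mul_le_tsum_sq_mul_tsum_sq _ _).trans (mul_le_mul_left (hφ t) _)
    _ = C * ∑' s, (∑' t, a s t ^ 2) * x s ^ 2 := by
        simp only [ENNReal.tsum_mul_left, mul_pow]
        rw [ENNReal.tsum_comm]
        simp only [ENNReal.tsum_mul_right]
    _ ≤ C * ∑' s, D * x s ^ 2 := by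
        gcongr with s
        exact ha s
    _ = C * D * ∑' s, x s ^ 2 := by rw [ENNReal.tsum_mul_left, mul_assoc]

lemma tsum_enorm_sq_mul_le_of_norm_le_one {ι R : Type*} [SeminormedRing R] {ε f : ι → R}
    (hε : ∀ i, ‖ε i‖ ≤ 1) : ∑' i, ‖ε i * f i‖ₑ ^ 2 ≤ ∑' i, ‖f i‖ₑ ^ 2 := by
  refine ENNReal.tsum_le_tsum fun i ↦ pow_le_pow_left' ?_ 2
  exact enorm_le_iff_norm_le.2 <| (norm_mul_le _ _).trans <|
    mul_le_of_le_one_left (norm_nonneg _) (hε i)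

end SquareSums

section SquareSummable

variable {ι : Type*} {E : ι → Type*} [∀ i, NormedAddCommGroup (E i)]

lemma memℓp_two_iff_tsum_enorm_sq_ne_top {f : ∀ i, E i} :
    Memℓp f 2 ↔ ∑' i, ‖f i‖ₑ ^ 2 ≠ ∞ := by
  have hsummable : Memℓp f 2 ↔ Summable fun i ↦ ‖f i‖ ^ 2 := by
    simpa using memℓp_gen_iff (p := 2) (f := f) (by norm_num)
  rw [hsummable, ← summable_norm_iff, ← tsum_enorm_ne_top_iff_summable_norm]
  simp only [enorm_pow, enorm_norm]

lemma lp_two_enorm_sq_eq_tsum (f : lp E 2) : ‖f‖ₑ ^ 2 = ∑' i, ‖f i‖ₑ ^ 2 := by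
  have hf : HasSum (fun i ↦ ‖f i‖ ^ 2) (‖f‖ ^ 2) := by
    simpa using lp.hasSum_norm (p := 2) (by norm_num) f
  simpa [ENNReal.ofReal_pow] using
    (congrArg ENNReal.ofReal hf.tsum_eq).symm.trans
      (ENNReal.ofReal_tsum_of_nonneg (fun i ↦ sq_nonneg ‖f i‖) hf.summable)

lemma exists_continuousLinearMap_lp_two_of_tsum_enorm_sq_le {𝕜 V : Type*}
    [NontriviallyNormedField 𝕜] [SeminormedAddCommGroup V] [NormedSpace 𝕜 V]
    [∀ i, NormedSpace 𝕜 (E i)]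
    (L : V →ₗ[𝕜] ∀ i, E i) (C : ℝ≥0) (hL : ∀ x, ∑' i, ‖L x i‖ₑ ^ 2 ≤ (C * ‖x‖ₑ) ^ 2) :
    ∃ B : V →L[𝕜] lp E 2, (∀ x, ⇑(B x) = L x) ∧ ‖B‖ ≤ C := by
  have mem (x : V) : Memℓp (L x) 2 :=
    memℓp_two_iff_tsum_enorm_sq_ne_top.2 ((hL x).trans_lt (by finiteness)).ne
  let L₂ : V →ₗ[𝕜] lp E 2 :=
    { toFun x := ⟨L x, mem x⟩
      map_add' x y := Subtype.ext (map_add L x y)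
      map_smul' c x := Subtype.ext (map_smul L c x) }
  have bound (x : V) : ‖L₂ x‖ ≤ C * ‖x‖ := by
    have : ‖L₂ x‖ₑ ≤ C * ‖x‖ₑ := by
      rw [← ENNReal.pow_le_pow_left_iff two_ne_zero, lp_two_enorm_sq_eq_tsum]
      exact hL x
    simpa [enorm_eq_nnnorm, ← ENNReal.coe_mul, ← NNReal.coe_le_coe] using this
  exact ⟨L₂.mkContinuous C bound, fun _ ↦ rfl, L₂.mkContinuous_norm_le C.2 bound⟩

lemma exists_continuousLinearMap_of_tsum_sq_tsum_enorm_le {𝕜 S T : Type*}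
    [NontriviallyNormedField 𝕜] [CompleteSpace 𝕜] (k : S → T → 𝕜) (C : ℝ≥0)
    (hk : ∀ x : lp (fun _ : S ↦ 𝕜) 2, ∑' t, (∑' s, ‖k s t * x s‖ₑ) ^ 2 ≤ (C * ‖x‖ₑ) ^ 2) :
    ∃ B : lp (fun _ : S ↦ 𝕜) 2 →L[𝕜] lp (fun _ : T ↦ 𝕜) 2,
      (∀ x t, B x t = ∑' s, k s t * x s) ∧ ‖B‖ ≤ C := by
  have summable (x : lp (fun _ : S ↦ 𝕜) 2) (t : T) : Summable fun s ↦ k s t * x s := by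
    have hsq : (∑' s, ‖k s t * x s‖ₑ) ^ 2 ≠ ∞ :=
      (((ENNReal.le_tsum t).trans (hk x)).trans_lt (by finiteness)).ne
    exact (tsum_enorm_ne_top_iff_summable_norm.1 <|
      (ENNReal.pow_ne_top_iff.1 hsq).resolve_right two_ne_zero).of_norm
  let L : lp (fun _ : S ↦ 𝕜) 2 →ₗ[𝕜] T → 𝕜 :=
    { toFun x t := ∑' s, k s t * x s
      map_add' x y := by
        ext t
        simpa [mul_add] using (summable x t).tsum_add (summable y t)
      map_smul' c x := by
        ext t
        simpa [mul_left_comm] using (summable x t).tsum_mul_left c }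
  obtain ⟨B, hBL, hB⟩ := exists_continuousLinearMap_lp_two_of_tsum_enorm_sq_le L C fun x ↦
    (ENNReal.tsum_le_tsum fun t ↦ pow_le_pow_left' enorm_tsum_le_tsum_enorm 2).trans (hk x)
  exact ⟨B, fun x t ↦ congrFun (hBL x) t, hB⟩

lemma tsum_enorm_sq_apply_single_le {𝕜 S : Type*} [NontriviallyNormedField 𝕜]
    [∀ i, NormedSpace 𝕜 (E i)] [DecidableEq S]
    (A : lp (fun _ : S ↦ 𝕜) 2 →L[𝕜] lp E 2) (s : S) :
    ∑' i, ‖A (lp.single 2 s 1) i‖ₑ ^ 2 ≤ ‖A‖ₑ ^ 2 := by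
  have hnorm : ‖lp.single (E := fun _ : S ↦ 𝕜) 2 s 1‖ₑ = 1 := by
    rw [← ofReal_norm, lp.norm_single (by norm_num), norm_one, ENNReal.ofReal_one]
  rw [← lp_two_enorm_sq_eq_tsum]
  gcongr
  simpa [hnorm] using A.le_opENorm (lp.single 2 s 1)

end SquareSummable

namespace IsSchurMultiplier

variable {S T : Type*} {ψ φ : S × T → ℂ} {C D : ℝ}

lemma iff_apply_single [DecidableEq S] :
    IsSchurMultiplier ψ C ↔
      ∀ A : lp (fun _ : S ↦ ℂ) 2 →L[ℂ] lp (fun _ : T ↦ ℂ) 2,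
        ∃ B : lp (fun _ : S ↦ ℂ) 2 →L[ℂ] lp (fun _ : T ↦ ℂ) 2,
          (∀ s t, B (lp.single 2 s 1) t = ψ (s, t) * A (lp.single 2 s 1) t) ∧
          ‖B‖ ≤ C * ‖A‖ := by
  rw [Subsingleton.elim (inferInstanceAs (DecidableEq S)) (Classical.decEq S)]
  simp [IsSchurMultiplier, lp.inner_single_left]

lemma add (hψ : IsSchurMultiplier ψ C) (hφ : IsSchurMultiplier φ D) :
    IsSchurMultiplier (ψ + φ) (C + D) := by
  classical
  rw [iff_apply_single] at *
  intro A
  obtain ⟨B₁, hB₁, hnorm₁⟩ := hψ A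
  obtain ⟨B₂, hB₂, hnorm₂⟩ := hφ A
  refine ⟨B₁ + B₂, fun s t ↦ ?_, ?_⟩
  · simp [hB₁, hB₂, add_mul]
  · calc ‖B₁ + B₂‖ ≤ ‖B₁‖ + ‖B₂‖ := norm_add_le _ _
      _ ≤ C * ‖A‖ + D * ‖A‖ := by gcongr
      _ = (C + D) * ‖A‖ := by ring

lemma star_swap (hψ : IsSchurMultiplier ψ C) :
    IsSchurMultiplier (fun p : T × S ↦ star (ψ p.swap)) C := by
  intro A
  obtain ⟨B, hB, hnorm⟩ := hψ (adjoint A)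
  refine ⟨adjoint B, fun t s ↦ ?_, by simpa using hnorm⟩
  simpa [adjoint_inner_left, adjoint_inner_right] using congrArg star (hB s t)

lemma of_tsum_column_enorm_sq_le {K : ℝ≥0} (h : ∀ t, ∑' s, ‖ψ (s, t)‖ₑ ^ 2 ≤ K ^ 2) :
    IsSchurMultiplier ψ K := by
  classical
  rw [iff_apply_single]
  intro A
  obtain ⟨B, hB, hnorm⟩ := exists_continuousLinearMap_of_tsum_sq_tsum_enorm_le
    (fun s t ↦ ψ (s, t) * A (lp.single 2 s 1) t) (K * ‖A‖₊) fun x ↦ by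
      simpa [mul_pow, lp_two_enorm_sq_eq_tsum x, ← enorm_eq_nnnorm] using
        tsum_sq_tsum_mul_mul_le h (tsum_enorm_sq_apply_single_le A) fun s ↦ ‖x s‖ₑ
  refine ⟨B, fun s t ↦ ?_, by simpa using hnorm⟩
  rw [hB, tsum_eq_single s fun r hr ↦ by simp [Pi.single_eq_of_ne hr]]
  simp

lemma of_tsum_row_enorm_sq_le {K : ℝ≥0} (h : ∀ s, ∑' t, ‖ψ (s, t)‖ₑ ^ 2 ≤ K ^ 2) :
    IsSchurMultiplier ψ K := by
  have hstar : IsSchurMultiplier (fun p : T × S ↦ star (ψ p.swap)) K :=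
    of_tsum_column_enorm_sq_le fun s ↦ by simpa using h s
  simpa using hstar.star_swap

end IsSchurMultiplier

/-- if `ψ = ψ₁ + ψ₂` with row-square sums of `ψ₁` bounded by `C₁²` and
column-square sums of `ψ₂` bounded by `C₂²`, then for every `ε` with `|ε(s,t)| ≤ 1` the
product `ε·ψ` is a Schur multiplier of norm at most `C₁ + C₂`. -/
theorem stmt_3 {S T : Type*} (ψ ψ₁ ψ₂ : S × T → ℂ) (C₁ C₂ : ℝ)
    (hC₁ : 0 ≤ C₁) (hC₂ : 0 ≤ C₂)
    (hsum : ∀ p : S × T, ψ p = ψ₁ p + ψ₂ p)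
    (h1 : ∀ s : S, (∑' t : T, (‖ψ₁ (s, t)‖₊ : ℝ≥0∞) ^ 2) ≤ ENNReal.ofReal (C₁ ^ 2))
    (h2 : ∀ t : T, (∑' s : S, (‖ψ₂ (s, t)‖₊ : ℝ≥0∞) ^ 2) ≤ ENNReal.ofReal (C₂ ^ 2)) :
    ∀ ε : S × T → ℂ, (∀ p, ‖ε p‖ ≤ 1) →
      IsSchurMultiplier (fun p => ε p * ψ p) (C₁ + C₂) := by
  intro ε hε
  lift C₁ to ℝ≥0 using hC₁
  lift C₂ to ℝ≥0 using hC₂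
  simp only [ENNReal.ofReal_pow, NNReal.zero_le_coe, ENNReal.ofReal_coe_nnreal] at h1 h2
  have hrow : IsSchurMultiplier (fun p ↦ ε p * ψ₁ p) C₁ := .of_tsum_row_enorm_sq_le fun s ↦
    (tsum_enorm_sq_mul_le_of_norm_le_one fun t ↦ hε (s, t)).trans (h1 s)
  have hcol : IsSchurMultiplier (fun p ↦ ε p * ψ₂ p) C₂ := .of_tsum_column_enorm_sq_le fun t ↦
    (tsum_enorm_sq_mul_le_of_norm_le_one fun s ↦ hε (s, t)).trans (h2 t)
  simpa only [Pi.add_def, ← mul_add, ← hsum] using hrow.add hcol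
end
end

section
/- Let G be a group, φ : G → ℂ, and C ≥ 0. Suppose there is a partition G × G = Γ₁ ∪ Γ₂ (disjoint) with sup_{s∈G} Σ_{t : (s,t)∈Γ₁} |φ(st)|² ≤ C² and sup_{t∈G} Σ_{s : (s,t)∈Γ₂} |φ(st)|² ≤ C². Then for every complex Hilbert space H and every finitely supported function a : G → B(H), the operator T_{φ·a} = Σ_{x∈G} φ(x) λ(x) ⊗ a(x) on ℓ²(G; H) satisfies ‖Σ_{x∈G} φ(x) λ(x) ⊗ a(x)‖ ≤ 2C · max{ ‖Σ_{x∈G} a(x)* a(x)‖^{1/2}, ‖Σ_{x∈G} a(x) a(x)*‖^{1/2} }. -/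
open scoped ENNReal NNReal
open MeasureTheory ContinuousLinearMap

noncomputable section

/-!
Put the entry `φ (s * t) • a (s * t)` of the operator matrix in row `s` and column `t⁻¹`. Every row
and every column of `(s, t) ↦ a (s * t)` is an enumeration of the family `a`, so the columns are
controlled by `‖∑ a(x)* a(x)‖` and the rows by `‖∑ a(x) a(x)*‖`. Cauchy–Schwarz over `Γ₁` pairs
`φ(st) g(s)` with `a(st) f(t⁻¹)`, and over `Γ₂` it pairs `φ(st) f(t⁻¹)` with `a(st)* g(s)`.
-/

section SchurProduct

open scoped InnerProductSpace

variable {ι S T 𝕜 H K : Type*} [RCLike 𝕜] [NormedAddCommGroup H] [InnerProductSpace 𝕜 H]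
  [NormedAddCommGroup K] [InnerProductSpace 𝕜 K]

lemma enorm_inner_le (x y : H) : ‖⟪x, y⟫_𝕜‖ₑ ≤ ‖x‖ₑ * ‖y‖ₑ := by
  simp only [enorm_eq_nnnorm]
  exact_mod_cast nnnorm_inner_le_nnnorm x y

lemma tsum_mul_le_of_tsum_sq_le {u v : ι → ℝ≥0∞} {A B : ℝ≥0∞} (hu : ∑' i, u i ^ 2 ≤ A ^ 2)
    (hv : ∑' i, v i ^ 2 ≤ B ^ 2) : ∑' i, u i * v i ≤ A * B := by
  have sqrt_sum_le (s : Finset ι) {w : ι → ℝ≥0∞} {D : ℝ≥0∞} (hw : ∑' i, w i ^ 2 ≤ D ^ 2) :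
      (∑ i ∈ s, w i ^ (2 : ℝ)) ^ (1 / 2 : ℝ) ≤ D := by
    rw [one_div, ENNReal.rpow_inv_le_iff two_pos]
    simpa only [ENNReal.rpow_two] using (ENNReal.sum_le_tsum s).trans hw
  refine ENNReal.summable.tsum_le_of_sum_le fun s ↦ ?_
  calc ∑ i ∈ s, u i * v i
      ≤ (∑ i ∈ s, u i ^ (2 : ℝ)) ^ (1 / 2 : ℝ) * (∑ i ∈ s, v i ^ (2 : ℝ)) ^ (1 / 2 : ℝ) :=
        ENNReal.inner_le_Lp_mul_Lq s u v .two_two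
    _ ≤ A * B := mul_le_mul' (sqrt_sum_le s hu) (sqrt_sum_le s hv)

lemma tsum_mul_enorm_inner_le {u : S → T → ℝ≥0∞} {z : S → T → K} {g : S → K} {C P Q : ℝ≥0∞}
    (hu : ∀ s, ∑' t, u s t ^ 2 ≤ C ^ 2) (hz : ∑' s, ∑' t, ‖z s t‖ₑ ^ 2 ≤ Q ^ 2)
    (hg : ∑' s, ‖g s‖ₑ ^ 2 ≤ P ^ 2) :
    ∑' s, ∑' t, u s t * ‖⟪z s t, g s⟫_𝕜‖ₑ ≤ C * P * Q := by
  have hug : ∑' p : S × T, (u p.1 p.2 * ‖g p.1‖ₑ) ^ 2 ≤ (C * P) ^ 2 :=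
    calc ∑' p : S × T, (u p.1 p.2 * ‖g p.1‖ₑ) ^ 2
        = ∑' s, (∑' t, u s t ^ 2) * ‖g s‖ₑ ^ 2 := by
          simp only [ENNReal.tsum_prod', mul_pow, ENNReal.tsum_mul_right]
      _ ≤ ∑' s, C ^ 2 * ‖g s‖ₑ ^ 2 := by gcongr with s; exact hu s
      _ ≤ (C * P) ^ 2 := by rw [ENNReal.tsum_mul_left, mul_pow]; gcongr
  rw [← ENNReal.tsum_prod' (f := fun p : S × T ↦ ‖z p.1 p.2‖ₑ ^ 2)] at hz
  calc ∑' s, ∑' t, u s t * ‖⟪z s t, g s⟫_𝕜‖ₑ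
      ≤ ∑' s, ∑' t, u s t * ‖g s‖ₑ * ‖z s t‖ₑ := by
        simp only [mul_assoc, mul_comm ‖g _‖ₑ]
        gcongr with s t
        exact enorm_inner_le _ _
    _ ≤ C * P * Q := by
        rw [← ENNReal.tsum_prod (f := fun s t ↦ u s t * ‖g s‖ₑ * ‖z s t‖ₑ)]
        exact tsum_mul_le_of_tsum_sq_le hug hz

lemma tsum_enorm_apply_sq_le {A : S → T → H →L[𝕜] K} {f : T → H} {M F : ℝ≥0∞}
    (hA : ∀ t h, ∑' s, ‖A s t h‖ₑ ^ 2 ≤ (M * ‖h‖ₑ) ^ 2) (hf : ∑' t, ‖f t‖ₑ ^ 2 ≤ F ^ 2) :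
    ∑' s, ∑' t, ‖A s t (f t)‖ₑ ^ 2 ≤ (M * F) ^ 2 :=
  calc ∑' s, ∑' t, ‖A s t (f t)‖ₑ ^ 2
      = ∑' t, ∑' s, ‖A s t (f t)‖ₑ ^ 2 := ENNReal.tsum_comm
    _ ≤ ∑' t, (M * ‖f t‖ₑ) ^ 2 := by gcongr with t; exact hA t (f t)
    _ ≤ (M * F) ^ 2 := by simp only [mul_pow, ENNReal.tsum_mul_left]; gcongr

theorem tsum_add_mul_enorm_inner_apply_le [CompleteSpace H] [CompleteSpace K]
    {u v : S → T → ℝ≥0∞} {A : S → T → H →L[𝕜] K} {f : T → H} {g : S → K}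
    {C₁ C₂ M₁ M₂ P Q : ℝ≥0∞}
    (hu : ∀ s, ∑' t, u s t ^ 2 ≤ C₁ ^ 2) (hv : ∀ t, ∑' s, v s t ^ 2 ≤ C₂ ^ 2)
    (hcol : ∀ t h, ∑' s, ‖A s t h‖ₑ ^ 2 ≤ (M₁ * ‖h‖ₑ) ^ 2)
    (hrow : ∀ s k, ∑' t, ‖adjoint (A s t) k‖ₑ ^ 2 ≤ (M₂ * ‖k‖ₑ) ^ 2)
    (hf : ∑' t, ‖f t‖ₑ ^ 2 ≤ P ^ 2) (hg : ∑' s, ‖g s‖ₑ ^ 2 ≤ Q ^ 2) :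
    ∑' s, ∑' t, (u s t + v s t) * ‖⟪A s t (f t), g s⟫_𝕜‖ₑ ≤ (C₁ * M₁ + C₂ * M₂) * (P * Q) := by
  have u_part : ∑' s, ∑' t, u s t * ‖⟪A s t (f t), g s⟫_𝕜‖ₑ ≤ C₁ * Q * (M₁ * P) :=
    tsum_mul_enorm_inner_le hu (tsum_enorm_apply_sq_le hcol hf) hg
  have v_part : ∑' t, ∑' s, v s t * ‖⟪adjoint (A s t) (g s), f t⟫_𝕜‖ₑ ≤ C₂ * P * (M₂ * Q) :=
    tsum_mul_enorm_inner_le hv (tsum_enorm_apply_sq_le hrow hg) hf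
  have inner_swap (s t) : ‖⟪adjoint (A s t) (g s), f t⟫_𝕜‖ₑ = ‖⟪A s t (f t), g s⟫_𝕜‖ₑ := by
    rw [adjoint_inner_left, ← inner_conj_symm, RCLike.enorm_conj]
  simp only [inner_swap] at v_part
  rw [ENNReal.tsum_comm] at v_part
  calc ∑' s, ∑' t, (u s t + v s t) * ‖⟪A s t (f t), g s⟫_𝕜‖ₑ
      = ∑' s, ∑' t, u s t * ‖⟪A s t (f t), g s⟫_𝕜‖ₑ
        + ∑' s, ∑' t, v s t * ‖⟪A s t (f t), g s⟫_𝕜‖ₑ := by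
        simp only [add_mul, ENNReal.tsum_add]
    _ ≤ C₁ * Q * (M₁ * P) + C₂ * P * (M₂ * Q) := add_le_add u_part v_part
    _ = (C₁ * M₁ + C₂ * M₂) * (P * Q) := by ring

end SchurProduct

lemma tsum_enorm_sq_eq_enorm_sq {ι : Type*} {E : ι → Type*} [∀ i, NormedAddCommGroup (E i)]
    (f : lp E 2) :
    ∑' i, ‖f i‖ₑ ^ 2 = ‖f‖ₑ ^ 2 := by
  have hsum : HasSum (fun i ↦ ‖f i‖ ^ 2) (‖f‖ ^ 2) := by
    simpa using lp.hasSum_norm (p := 2) (by norm_num) f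
  simp only [← ofReal_norm, ← ENNReal.ofReal_pow (norm_nonneg _)]
  rw [← hsum.tsum_eq, ENNReal.ofReal_tsum_of_nonneg (fun _ ↦ by positivity) hsum.summable]

section RowColumn

open scoped InnerProductSpace

variable {ι 𝕜 H K : Type*} [RCLike 𝕜] [NormedAddCommGroup H] [InnerProductSpace 𝕜 H]
  [CompleteSpace H] [NormedAddCommGroup K] [InnerProductSpace 𝕜 K] [CompleteSpace K]

/-- The column norm `‖∑ a(x)* a(x)‖^{1/2}` of a finitely supported family of operators. -/
def columnNorm (a : ι →₀ (H →L[𝕜] K)) : ℝ :=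
  √‖∑ x ∈ a.support, adjoint (a x) ∘L a x‖

/-- The row norm `‖∑ a(x) a(x)*‖^{1/2}` of a finitely supported family of operators. -/
def rowNorm (a : ι →₀ (H →L[𝕜] K)) : ℝ :=
  √‖∑ x ∈ a.support, a x ∘L adjoint (a x)‖

lemma sum_norm_apply_sq_le (s : Finset ι) (b : ι → H →L[𝕜] K) (v : H) :
    ∑ x ∈ s, ‖b x v‖ ^ 2 ≤ ‖∑ x ∈ s, adjoint (b x) ∘L b x‖ * ‖v‖ ^ 2 := by
  set R := ∑ x ∈ s, adjoint (b x) ∘L b x with hR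
  calc ∑ x ∈ s, ‖b x v‖ ^ 2 = RCLike.re ⟪R v, v⟫_𝕜 := by
        simp only [hR, _root_.sum_apply, sum_inner, map_sum, apply_norm_sq_eq_inner_adjoint_left]
    _ ≤ ‖R v‖ * ‖v‖ := re_inner_le_norm _ _
    _ ≤ ‖R‖ * ‖v‖ * ‖v‖ := by gcongr; exact R.le_opNorm v
    _ = ‖R‖ * ‖v‖ ^ 2 := by ring

lemma sum_enorm_apply_sq_le (s : Finset ι) (b : ι → H →L[𝕜] K) (v : H) :
    ∑ x ∈ s, ‖b x v‖ₑ ^ 2 ≤ (ENNReal.ofReal √‖∑ x ∈ s, adjoint (b x) ∘L b x‖ * ‖v‖ₑ) ^ 2 := by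
  simp only [← ofReal_norm (_ : K), ← ofReal_norm v, ← ENNReal.ofReal_pow (norm_nonneg _)]
  rw [← ENNReal.ofReal_sum_of_nonneg fun _ _ ↦ by positivity,
    ← ENNReal.ofReal_mul (Real.sqrt_nonneg _), ← ENNReal.ofReal_pow (by positivity),
    mul_pow, Real.sq_sqrt (norm_nonneg _)]
  exact ENNReal.ofReal_le_ofReal (sum_norm_apply_sq_le s b v)

lemma tsum_enorm_apply_sq_le_columnNorm (a : ι →₀ (H →L[𝕜] K)) (h : H) :
    ∑' x, ‖a x h‖ₑ ^ 2 ≤ (ENNReal.ofReal (columnNorm a) * ‖h‖ₑ) ^ 2 := by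
  rw [tsum_eq_sum (s := a.support) fun x hx ↦ by simp [Finsupp.notMem_support_iff.1 hx]]
  exact sum_enorm_apply_sq_le a.support a h

lemma tsum_enorm_adjoint_apply_sq_le_rowNorm (a : ι →₀ (H →L[𝕜] K)) (k : K) :
    ∑' x, ‖adjoint (a x) k‖ₑ ^ 2 ≤ (ENNReal.ofReal (rowNorm a) * ‖k‖ₑ) ^ 2 := by
  rw [tsum_eq_sum (s := a.support) fun x hx ↦ by simp [Finsupp.notMem_support_iff.1 hx]]
  simpa only [rowNorm, adjoint_adjoint] using
    sum_enorm_apply_sq_le a.support (fun x ↦ adjoint (a x)) k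

end RowColumn

section Convolution

open scoped InnerProductSpace

variable {G 𝕜 H K : Type*} [Group G] [RCLike 𝕜] [NormedAddCommGroup H] [InnerProductSpace 𝕜 H]
  [NormedAddCommGroup K] [InnerProductSpace 𝕜 K]

lemma enorm_inner_convolution_le {φ : G → 𝕜} {a : G →₀ (H →L[𝕜] K)} {f : G → H}
    {F g : lp (fun _ : G ↦ K) 2} (hF : ∀ s, F s = ∑ x ∈ a.support, φ x • a x (f (x⁻¹ * s))) :
    ‖⟪F, g⟫_𝕜‖ₑ ≤ ∑' s, ∑' t, ‖φ (s * t)‖ₑ * ‖⟪a (s * t) (f t⁻¹), g s⟫_𝕜‖ₑ := by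
  rw [lp.inner_eq_tsum]
  refine enorm_tsum_le_tsum_enorm.trans (ENNReal.tsum_le_tsum fun s ↦ ?_)
  calc ‖⟪F s, g s⟫_𝕜‖ₑ
      ≤ ∑ x ∈ a.support, ‖⟪φ x • a x (f (x⁻¹ * s)), g s⟫_𝕜‖ₑ := by
        rw [hF, sum_inner]; exact enorm_sum_le _ _
    _ = ∑ x ∈ a.support, ‖φ x‖ₑ * ‖⟪a x (f (x⁻¹ * s)), g s⟫_𝕜‖ₑ := by
        simp only [inner_smul_left, enorm_mul, RCLike.enorm_conj]
    _ ≤ ∑' x, ‖φ x‖ₑ * ‖⟪a x (f (x⁻¹ * s)), g s⟫_𝕜‖ₑ := ENNReal.sum_le_tsum _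
    _ = ∑' t, ‖φ (s * t)‖ₑ * ‖⟪a (s * t) (f t⁻¹), g s⟫_𝕜‖ₑ := by
        rw [← (Equiv.mulLeft s).tsum_eq]
        simp only [Equiv.coe_mulLeft, mul_inv_rev, inv_mul_cancel_right]

variable [CompleteSpace H] [CompleteSpace K]

theorem enorm_inner_convolution_le_of_le_add {φ : G → 𝕜} {u v : G → G → ℝ≥0∞} {C₁ C₂ : ℝ≥0∞}
    (hφ : ∀ s t, ‖φ (s * t)‖ₑ ≤ u s t + v s t)
    (hu : ∀ s, ∑' t, u s t ^ 2 ≤ C₁ ^ 2) (hv : ∀ t, ∑' s, v s t ^ 2 ≤ C₂ ^ 2)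
    {a : G →₀ (H →L[𝕜] K)} {f : lp (fun _ : G ↦ H) 2} {F g : lp (fun _ : G ↦ K) 2}
    (hF : ∀ s, F s = ∑ x ∈ a.support, φ x • a x (f (x⁻¹ * s))) :
    ‖⟪F, g⟫_𝕜‖ₑ ≤ (C₁ * ENNReal.ofReal (columnNorm a) + C₂ * ENNReal.ofReal (rowNorm a))
      * (‖f‖ₑ * ‖g‖ₑ) := by
  have hcol (t : G) (h : H) :
      ∑' s, ‖a (s * t) h‖ₑ ^ 2 ≤ (ENNReal.ofReal (columnNorm a) * ‖h‖ₑ) ^ 2 :=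
    ((Equiv.mulRight t).tsum_eq fun x ↦ ‖a x h‖ₑ ^ 2).trans_le
      (tsum_enorm_apply_sq_le_columnNorm a h)
  have hrow (s : G) (k : K) :
      ∑' t, ‖adjoint (a (s * t)) k‖ₑ ^ 2 ≤ (ENNReal.ofReal (rowNorm a) * ‖k‖ₑ) ^ 2 :=
    ((Equiv.mulLeft s).tsum_eq fun x ↦ ‖adjoint (a x) k‖ₑ ^ 2).trans_le
      (tsum_enorm_adjoint_apply_sq_le_rowNorm a k)
  have hf : ∑' t, ‖f t⁻¹‖ₑ ^ 2 ≤ ‖f‖ₑ ^ 2 :=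
    (((Equiv.inv G).tsum_eq fun t ↦ ‖f t‖ₑ ^ 2).trans (tsum_enorm_sq_eq_enorm_sq f)).le
  calc ‖⟪F, g⟫_𝕜‖ₑ
      ≤ ∑' s, ∑' t, ‖φ (s * t)‖ₑ * ‖⟪a (s * t) (f t⁻¹), g s⟫_𝕜‖ₑ := enorm_inner_convolution_le hF
    _ ≤ ∑' s, ∑' t, (u s t + v s t) * ‖⟪a (s * t) (f t⁻¹), g s⟫_𝕜‖ₑ := by
        gcongr with s t; exact hφ s t
    _ ≤ (C₁ * ENNReal.ofReal (columnNorm a) + C₂ * ENNReal.ofReal (rowNorm a))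
          * (‖f‖ₑ * ‖g‖ₑ) :=
        tsum_add_mul_enorm_inner_apply_le hu hv hcol hrow hf (tsum_enorm_sq_eq_enorm_sq g).le

theorem norm_convolution_le_of_le_add {φ : G → 𝕜} {u v : G → G → ℝ≥0∞} {C₁ C₂ : ℝ}
    (hC₁ : 0 ≤ C₁) (hC₂ : 0 ≤ C₂) (hφ : ∀ s t, ‖φ (s * t)‖ₑ ≤ u s t + v s t)
    (hu : ∀ s, ∑' t, u s t ^ 2 ≤ ENNReal.ofReal (C₁ ^ 2))
    (hv : ∀ t, ∑' s, v s t ^ 2 ≤ ENNReal.ofReal (C₂ ^ 2))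
    {a : G →₀ (H →L[𝕜] K)} {T : lp (fun _ : G ↦ H) 2 →L[𝕜] lp (fun _ : G ↦ K) 2}
    (hT : ∀ f s, T f s = ∑ x ∈ a.support, φ x • a x (f (x⁻¹ * s))) :
    ‖T‖ ≤ C₁ * columnNorm a + C₂ * rowNorm a := by
  have hcol : 0 ≤ columnNorm a := Real.sqrt_nonneg _
  have hrow : 0 ≤ rowNorm a := Real.sqrt_nonneg _
  rw [ENNReal.ofReal_pow hC₁] at hu
  rw [ENNReal.ofReal_pow hC₂] at hv
  refine opNorm_le_of_re_inner_le (by positivity) fun f g hf hg ↦ (RCLike.re_le_norm _).trans ?_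
  have key := enorm_inner_convolution_le_of_le_add (g := g) hφ hu hv (hT f)
  rwa [← ofReal_norm f, ← ofReal_norm g, hf, hg, ENNReal.ofReal_one, mul_one, mul_one,
    ← ENNReal.ofReal_mul hC₁, ← ENNReal.ofReal_mul hC₂,
    ← ENNReal.ofReal_add (by positivity) (by positivity), ← ofReal_norm,
    ENNReal.ofReal_le_ofReal_iff (by positivity)] at key

theorem stmt_4_general (φ : G → 𝕜) {C₁ C₂ : ℝ} (hC₁ : 0 ≤ C₁) (hC₂ : 0 ≤ C₂)
    {Γ₁ Γ₂ : Set (G × G)} (hU : Γ₁ ∪ Γ₂ = Set.univ)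
    (h₁ : ∀ s : G, ∑' t : G, Γ₁.indicator (fun p ↦ ‖φ (p.1 * p.2)‖ₑ ^ 2) (s, t)
      ≤ ENNReal.ofReal (C₁ ^ 2))
    (h₂ : ∀ t : G, ∑' s : G, Γ₂.indicator (fun p ↦ ‖φ (p.1 * p.2)‖ₑ ^ 2) (s, t)
      ≤ ENNReal.ofReal (C₂ ^ 2))
    (a : G →₀ (H →L[𝕜] K)) (T : lp (fun _ : G ↦ H) 2 →L[𝕜] lp (fun _ : G ↦ K) 2)
    (hT : ∀ f s, T f s = ∑ x ∈ a.support, φ x • a x (f (x⁻¹ * s))) :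
    ‖T‖ ≤ C₁ * columnNorm a + C₂ * rowNorm a := by
  have indicator_sq (Γ : Set (G × G)) (p : G × G) :
      Γ.indicator (fun p ↦ ‖φ (p.1 * p.2)‖ₑ) p ^ 2
        = Γ.indicator (fun p ↦ ‖φ (p.1 * p.2)‖ₑ ^ 2) p := by
    by_cases hp : p ∈ Γ <;> simp [hp]
  simp only [← indicator_sq] at h₁ h₂
  refine norm_convolution_le_of_le_add hC₁ hC₂ (fun s t ↦ ?_) h₁ h₂ hT
  have hst : (s, t) ∈ Γ₁ ∪ Γ₂ := hU ▸ Set.mem_univ _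
  rcases hst with h | h <;> simp [h]

end Convolution

/-- if `G × G = Γ₁ ∪ Γ₂` (disjoint) with
`sup_s Σ_{t : (s,t)∈Γ₁} |φ(st)|² ≤ C²` and `sup_t Σ_{s : (s,t)∈Γ₂} |φ(st)|² ≤ C²`, then for
every Hilbert space `H` and finitely supported `a : G → B(H)`, the operator
`Σ_x φ(x) λ(x) ⊗ a(x)` on `ℓ²(G;H)` has norm at most
`2C · max{‖Σ a(x)*a(x)‖^{1/2}, ‖Σ a(x)a(x)*‖^{1/2}}`. -/
theorem stmt_4 {G : Type*} [Group G] (φ : G → ℂ) (C : ℝ) (hC : 0 ≤ C)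
    (Γ₁ Γ₂ : Set (G × G)) (hU : Γ₁ ∪ Γ₂ = Set.univ) (hD : Disjoint Γ₁ Γ₂)
    (h1 : ∀ s : G, (∑' t : G, Γ₁.indicator (fun p => (‖φ (p.1 * p.2)‖₊ : ℝ≥0∞) ^ 2) (s, t))
        ≤ ENNReal.ofReal (C ^ 2))
    (h2 : ∀ t : G, (∑' s : G, Γ₂.indicator (fun p => (‖φ (p.1 * p.2)‖₊ : ℝ≥0∞) ^ 2) (s, t))
        ≤ ENNReal.ofReal (C ^ 2))
    (H : Type*) [NormedAddCommGroup H] [InnerProductSpace ℂ H] [CompleteSpace H]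
    (a : G →₀ (H →L[ℂ] H))
    (T : lp (fun _ : G => H) 2 →L[ℂ] lp (fun _ : G => H) 2)
    (hT : ∀ (f : lp (fun _ : G => H) 2) (s : G),
      T f s = ∑ x ∈ a.support, φ x • ((a x) (f (x⁻¹ * s)))) :
    ‖T‖ ≤ 2 * C * max
      (Real.sqrt ‖∑ x ∈ a.support, (ContinuousLinearMap.adjoint (a x)).comp (a x)‖)
      (Real.sqrt ‖∑ x ∈ a.support, (a x).comp (ContinuousLinearMap.adjoint (a x))‖) := by
  exact (stmt_4_general φ hC hC hU h1 h2 a T hT).trans <| by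
    rw [two_mul, add_mul]; gcongr; exacts [le_max_left _ _, le_max_right _ _]
end
end

section
/- Let G be a group, H a complex Hilbert space, and a : G → B(H) a finitely supported function. Then max{ ‖Σ_{x∈G} a(x)* a(x)‖^{1/2}, ‖Σ_{x∈G} a(x) a(x)*‖^{1/2} } ≤ ‖Σ_{x∈G} λ(x) ⊗ a(x)‖, where Σ_{x∈G} λ(x) ⊗ a(x) denotes the operator T on ℓ²(G; H) given by (T f)(s) = Σ_{x∈G} a(x) f(x⁻¹ s). -/
open scoped ENNReal NNReal
open MeasureTheory ContinuousLinearMap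

noncomputable section

/-!
If `T = Σ λ(x) ⊗ a(x)`, then `T` maps a vector `v` placed at `1` to the family `(a(x) v)_x`, so
`Σ ‖a(x) v‖² ≤ ‖T‖² ‖v‖²`. This bounds the quadratic form of the positive operator `Σ a(x)* a(x)`,
hence its norm. The adjoint of `T` is the operator of the same kind with symbol `x ↦ a(x⁻¹)*`, and
the bound for it is the one for `Σ a(x) a(x)*`.
-/

open scoped InnerProduct

section SumNormSq

variable {ι 𝕜 E : Type*} {F : ι → Type*} [RCLike 𝕜]
  [NormedAddCommGroup E] [InnerProductSpace 𝕜 E] [CompleteSpace E]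
  [∀ i, NormedAddCommGroup (F i)] [∀ i, InnerProductSpace 𝕜 (F i)] [∀ i, CompleteSpace (F i)]

theorem opNorm_sum_adjoint_comp_self_le_of_sum_norm_sq_le {S : Finset ι} {b : ∀ i, E →L[𝕜] F i}
    {M : ℝ} (hM : 0 ≤ M) (hb : ∀ v, ∑ i ∈ S, ‖b i v‖ ^ 2 ≤ M * ‖v‖ ^ 2) :
    ‖∑ i ∈ S, (b i)† ∘L b i‖ ≤ M := by
  refine opNorm_le_of_re_inner_le hM fun v w hv hw => ?_
  have inner_le (i : ι) :
      RCLike.re (inner 𝕜 (b i v) (b i w)) ≤ (‖b i v‖ ^ 2 + ‖b i w‖ ^ 2) / 2 := by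
    linarith [re_inner_le_norm (𝕜 := 𝕜) (b i v) (b i w), two_mul_le_add_sq ‖b i v‖ ‖b i w‖]
  calc RCLike.re (inner 𝕜 ((∑ i ∈ S, (b i)† ∘L b i) v) w)
      = ∑ i ∈ S, RCLike.re (inner 𝕜 (b i v) (b i w)) := by
        simp [sum_inner, adjoint_inner_left]
    _ ≤ ∑ i ∈ S, (‖b i v‖ ^ 2 + ‖b i w‖ ^ 2) / 2 := Finset.sum_le_sum fun i _ => inner_le i
    _ = (∑ i ∈ S, ‖b i v‖ ^ 2 + ∑ i ∈ S, ‖b i w‖ ^ 2) / 2 := by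
        rw [← Finset.sum_div, Finset.sum_add_distrib]
    _ ≤ (M * ‖v‖ ^ 2 + M * ‖w‖ ^ 2) / 2 := by gcongr <;> exact hb _
    _ = M := by rw [hv, hw]; ring

end SumNormSq

theorem sum_norm_sq_le_lp_norm_sq {ι : Type*} {E : ι → Type*} [∀ i, NormedAddCommGroup (E i)]
    (f : lp E 2) (S : Finset ι) : ∑ i ∈ S, ‖f i‖ ^ 2 ≤ ‖f‖ ^ 2 := by
  simpa using lp.sum_rpow_le_norm_rpow (by norm_num) f S

section Normed

variable {G 𝕜 E F : Type*} [Group G] [NontriviallyNormedField 𝕜]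
  [NormedAddCommGroup E] [NormedSpace 𝕜 E] [NormedAddCommGroup F] [NormedSpace 𝕜 F]
  {p : ℝ≥0∞} [Fact (1 ≤ p)]

/-- `T` is the operator `∑ λ(x) ⊗ a(x)` of left convolution by the operator-valued function `a`,
which need not be finitely supported: the defining series has to converge at every point. -/
def IsLeftConvolution (T : lp (fun _ : G => E) p →L[𝕜] lp (fun _ : G => F) p)
    (a : G → E →L[𝕜] F) : Prop :=
  ∀ f s, HasSum (fun x => a x (f (x⁻¹ * s))) (T f s)

namespace IsLeftConvolution

variable [DecidableEq G] {T : lp (fun _ : G => E) p →L[𝕜] lp (fun _ : G => F) p}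
  {a : G → E →L[𝕜] F}

theorem apply_single (hT : IsLeftConvolution T a) (y : G) (v : E) (s : G) :
    T (lp.single p y v) s = a (s * y⁻¹) v := by
  have vanishing (x : G) (hx : x ≠ s * y⁻¹) :
      a x (lp.single (E := fun _ : G => E) p y v (x⁻¹ * s)) = 0 := by
    have : x⁻¹ * s ≠ y := fun h => hx (by simp [← h])
    rw [lp.single_apply_ne _ _ _ this, map_zero]
  simpa using (hT _ s).unique (hasSum_single _ vanishing)

theorem of_apply_single (hp : p ≠ ∞)
    (hT : ∀ y v s, T (lp.single p y v) s = a (s * y⁻¹) v) : IsLeftConvolution T a := by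
  intro f s
  have expansion : HasSum (fun y => a (s * y⁻¹) (f y)) (T f s) := by
    simp only [← hT]
    exact (lp.hasSum_single hp f).mapL (lp.evalCLM 𝕜 (fun _ : G => F) p s ∘L T)
  rw [← ((Equiv.inv G).trans (Equiv.mulRight s)).hasSum_iff] at expansion
  simpa [Function.comp_def] using expansion

end IsLeftConvolution

end Normed

namespace IsLeftConvolution

variable {G 𝕜 H K : Type*} [Group G] [RCLike 𝕜]
  [NormedAddCommGroup H] [InnerProductSpace 𝕜 H] [CompleteSpace H]
  [NormedAddCommGroup K] [InnerProductSpace 𝕜 K] [CompleteSpace K]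
  {T : lp (fun _ : G => H) 2 →L[𝕜] lp (fun _ : G => K) 2} {a : G → H →L[𝕜] K}

protected theorem adjoint (hT : IsLeftConvolution T a) :
    IsLeftConvolution (T†) fun x => (a x⁻¹)† := by
  classical
  refine of_apply_single (by norm_num) fun y w s => ext_inner_left 𝕜 fun v => ?_
  calc inner 𝕜 v ((T†) (lp.single 2 y w) s)
      = inner 𝕜 (lp.single 2 s v) ((T†) (lp.single 2 y w)) :=
      (lp.inner_single_left (G := fun _ : G => H) s v _).symm
    _ = inner 𝕜 (T (lp.single 2 s v)) (lp.single 2 y w) := adjoint_inner_right ..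
    _ = inner 𝕜 (T (lp.single 2 s v) y) w :=
      lp.inner_single_right (G := fun _ : G => K) y w _
    _ = inner 𝕜 v (((a (s * y⁻¹)⁻¹)†) w) := by
      rw [hT.apply_single, adjoint_inner_right, mul_inv_rev, inv_inv]

theorem norm_sum_adjoint_comp_self_le (hT : IsLeftConvolution T a) (S : Finset G) :
    ‖∑ x ∈ S, (a x)† ∘L a x‖ ≤ ‖T‖ ^ 2 := by
  classical
  refine opNorm_sum_adjoint_comp_self_le_of_sum_norm_sq_le (by positivity) fun v => ?_
  calc ∑ x ∈ S, ‖a x v‖ ^ 2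
      = ∑ x ∈ S, ‖T (lp.single 2 1 v) x‖ ^ 2 := by simp [hT.apply_single]
    _ ≤ ‖T (lp.single 2 1 v)‖ ^ 2 := sum_norm_sq_le_lp_norm_sq _ S
    _ ≤ (‖T‖ * ‖v‖) ^ 2 := by
      gcongr
      exact T.le_opNorm_of_le (lp.norm_single (E := fun _ : G => H) (by norm_num) 1 v).le
    _ = ‖T‖ ^ 2 * ‖v‖ ^ 2 := mul_pow ..

theorem norm_sum_comp_adjoint_self_le (hT : IsLeftConvolution T a) (S : Finset G) :
    ‖∑ x ∈ S, a x ∘L (a x)†‖ ≤ ‖T‖ ^ 2 := by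
  simpa using hT.adjoint.norm_sum_adjoint_comp_self_le (S.map (Equiv.inv G).toEmbedding)

end IsLeftConvolution

theorem stmt_5_general {G 𝕜 H K : Type*} [Group G] [RCLike 𝕜]
    [NormedAddCommGroup H] [InnerProductSpace 𝕜 H] [CompleteSpace H]
    [NormedAddCommGroup K] [InnerProductSpace 𝕜 K] [CompleteSpace K]
    {T : lp (fun _ : G => H) 2 →L[𝕜] lp (fun _ : G => K) 2} {a : G → H →L[𝕜] K}
    (hT : IsLeftConvolution T a) (S : Finset G) :
    max (√‖∑ x ∈ S, (a x)† ∘L a x‖) (√‖∑ x ∈ S, a x ∘L (a x)†‖) ≤ ‖T‖ :=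
  max_le (Real.sqrt_le_iff.2 ⟨norm_nonneg T, hT.norm_sum_adjoint_comp_self_le S⟩)
    (Real.sqrt_le_iff.2 ⟨norm_nonneg T, hT.norm_sum_comp_adjoint_self_le S⟩)

/-- for a finitely supported `a : G → B(H)`, the elementary inequality
`max{‖Σ a(x)*a(x)‖^{1/2}, ‖Σ a(x)a(x)*‖^{1/2}} ≤ ‖Σ_x λ(x) ⊗ a(x)‖` holds, where the
right-hand operator on `ℓ²(G;H)` is given by `(T f)(s) = Σ_x a(x) f(x⁻¹s)`. -/
theorem stmt_5 {G : Type*} [Group G]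
    (H : Type*) [NormedAddCommGroup H] [InnerProductSpace ℂ H] [CompleteSpace H]
    (a : G →₀ (H →L[ℂ] H))
    (T : lp (fun _ : G => H) 2 →L[ℂ] lp (fun _ : G => H) 2)
    (hT : ∀ (f : lp (fun _ : G => H) 2) (s : G),
      T f s = ∑ x ∈ a.support, (a x) (f (x⁻¹ * s))) :
    max (Real.sqrt ‖∑ x ∈ a.support, (ContinuousLinearMap.adjoint (a x)).comp (a x)‖)
        (Real.sqrt ‖∑ x ∈ a.support, (a x).comp (ContinuousLinearMap.adjoint (a x))‖)
      ≤ ‖T‖ := by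
  refine stmt_5_general (fun f s => ?_) a.support
  rw [hT]
  exact hasSum_sum_of_ne_finset_zero fun x hx => by simp [Finsupp.notMem_support_iff.1 hx]
end
end

section
/- Let G be a group, φ : G → ℂ, and C ≥ 0. Suppose that for every function ε : G → ℂ with |ε(x)| ≤ 1 for all x ∈ G, the kernel (s,t) ↦ ε(st)·φ(st) on G × G is a Schur multiplier of norm at most C. Then there is a partition G × G = Γ₁ ∪ Γ₂ (disjoint) such that sup_{s∈G} Σ_{t : (s,t)∈Γ₁} |φ(st)|² ≤ (4C)² and sup_{t∈G} Σ_{s : (s,t)∈Γ₂} |φ(st)|² ≤ (4C)². -/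
open scoped ENNReal NNReal
open MeasureTheory ContinuousLinearMap

noncomputable section

/-!
Let `ψ (s, t) = φ (s * t)`. Give every group element an independent random cube root of unity,
multiply each entry `a s t` of a finite matrix by that of `s * t` to get `Y`, and truncate `Y` to
`Y(1 + YᴴY)⁻¹`, which has operator norm at most `1/2`. Undoing the phases and averaging gives back
`a` up to a residual that is cubic in `Y`. If all rows and columns of `a` have `ℓ²`-norm at most
`1`, those of the residual have squared norm at most `1/2`, because the products of phases that make
up an off-diagonal entry of `YᴴY` are pairwise uncorrelated. Hence the supremum `σ` of `‖ψ ⊙ a‖`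
over such `a` satisfies `σ ≤ C/2 + (3/4)σ` (as `√(1/2) ≤ 3/4`), that is `σ ≤ 2C`.

On a finite rectangle apply this with `a s t = conj (ψ (s, t)) / √(max (r s) (c t))`, where `r` and
`c` are the squared norms of the rows and columns of `ψ`, and test `ψ ⊙ a` against the vectors `√r`
and `√c`: the `|ψ|²`-weighted mean of `√(min (r s) (c t))` is at most `2C`, so some row or column
has norm at most `2C`. Removing light rows and columns one at a time splits every finite rectangle,
and compactness of the space of sets gives the splitting of the whole product.
-/

section

open WithLp
open scoped Matrix Matrix.Norms.L2Operator BigOperators ComplexConjugate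

section Truncation

variable {𝕜 m n : Type*} [RCLike 𝕜] [Fintype m] [Fintype n]

-- The square of the right side exceeds that of the left by `‖w - YᴴYw‖²` (polarization).
lemma two_mul_norm_toLp_mulVec_le (Y : Matrix m n 𝕜) (w : n → 𝕜) :
    2 * ‖toLp 2 (Y *ᵥ w)‖ ≤ ‖toLp 2 w + toLp 2 ((Yᴴ * Y) *ᵥ w)‖ := by
  have hinner : RCLike.re (inner 𝕜 (toLp 2 w) (toLp 2 ((Yᴴ * Y) *ᵥ w))) =
      ‖toLp 2 (Y *ᵥ w)‖ ^ 2 := by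
    rw [← inner_self_eq_norm_sq (𝕜 := 𝕜)]
    simp only [EuclideanSpace.inner_toLp_toLp, ← Matrix.mulVec_mulVec, Matrix.star_mulVec,
      ← Matrix.dotProduct_mulVec, dotProduct_comm _ (star w), dotProduct_comm _ (star w ᵥ* Yᴴ)]
  have hpolar := re_inner_eq_norm_add_mul_self_sub_norm_sub_mul_self_div_four (𝕜 := 𝕜)
    (toLp 2 w) (toLp 2 ((Yᴴ * Y) *ᵥ w))
  refine le_of_sq_le_sq ?_ (norm_nonneg _)
  nlinarith [mul_self_nonneg ‖toLp 2 w - toLp 2 ((Yᴴ * Y) *ᵥ w)‖]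

variable [DecidableEq n]

/-- A stand-in for `Y` whose operator norm is at most `1/2`: each singular value `s` of `Y` is
replaced by `s / (1 + s²)`, so that the error is at most cubic in `Y`. -/
def truncation (Y : Matrix m n 𝕜) : Matrix m n 𝕜 :=
  Y * (1 + Yᴴ * Y)⁻¹

lemma isUnit_det_one_add_conjTranspose_mul_self (Y : Matrix m n 𝕜) :
    IsUnit (1 + Yᴴ * Y).det := by
  open scoped ComplexOrder in
  exact (Matrix.isUnit_iff_isUnit_det _).mp
    (Matrix.PosDef.one.add_posSemidef (Matrix.posSemidef_conjTranspose_mul_self Y)).isUnit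

lemma truncation_mul_one_add (Y : Matrix m n 𝕜) : truncation Y * (1 + Yᴴ * Y) = Y :=
  Matrix.nonsing_inv_mul_cancel_right _ _ (isUnit_det_one_add_conjTranspose_mul_self Y)

lemma sub_truncation (Y : Matrix m n 𝕜) : Y - truncation Y = truncation Y * (Yᴴ * Y) := by
  have h := truncation_mul_one_add Y
  rw [Matrix.mul_add, Matrix.mul_one] at h
  exact sub_eq_of_eq_add' h.symm

lemma one_add_mul_truncation [DecidableEq m] (Y : Matrix m n 𝕜) :
    (1 + Y * Yᴴ) * truncation Y = Y := by
  have hcomm : (1 + Y * Yᴴ) * Y = Y * (1 + Yᴴ * Y) := by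
    rw [Matrix.add_mul, Matrix.mul_add, Matrix.one_mul, Matrix.mul_one, Matrix.mul_assoc]
  rw [truncation, ← Matrix.mul_assoc, hcomm]
  exact Matrix.mul_nonsing_inv_cancel_right _ _ (isUnit_det_one_add_conjTranspose_mul_self Y)

lemma truncation_transpose [DecidableEq m] (Y : Matrix m n 𝕜) :
    truncation Yᵀ = (truncation Y)ᵀ := by
  have htranspose : (truncation Y)ᵀ * (1 + Yᵀᴴ * Yᵀ) = Yᵀ := by
    have h := congrArg Matrix.transpose (one_add_mul_truncation Y)
    rwa [Matrix.transpose_mul, Matrix.transpose_add, Matrix.transpose_one,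
      Matrix.transpose_mul] at h
  calc truncation Yᵀ = (truncation Y)ᵀ * (1 + Yᵀᴴ * Yᵀ) * (1 + Yᵀᴴ * Yᵀ)⁻¹ := by
        rw [htranspose, truncation]
    _ = (truncation Y)ᵀ :=
        Matrix.mul_nonsing_inv_cancel_right _ _ (isUnit_det_one_add_conjTranspose_mul_self Yᵀ)

lemma norm_toLp_truncation_mulVec_le (Y : Matrix m n 𝕜) (v : n → 𝕜) :
    ‖toLp 2 (truncation Y *ᵥ v)‖ ≤ 1 / 2 * ‖toLp 2 v‖ := by
  obtain ⟨w, rfl⟩ : ∃ w, (1 + Yᴴ * Y) *ᵥ w = v :=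
    Matrix.mulVec_surjective_iff_isUnit.mpr ((Matrix.isUnit_iff_isUnit_det _).mpr
      (isUnit_det_one_add_conjTranspose_mul_self Y)) v
  have hbound := two_mul_norm_toLp_mulVec_le Y w
  rw [Matrix.mulVec_mulVec, truncation_mul_one_add, Matrix.add_mulVec, Matrix.one_mulVec, toLp_add]
  linarith

lemma norm_truncation_le (Y : Matrix m n 𝕜) : ‖truncation Y‖ ≤ 1 / 2 := by
  rw [Matrix.l2_opNorm_def]
  exact ContinuousLinearMap.opNorm_le_bound _ (by norm_num) fun v ↦
    norm_toLp_truncation_mulVec_le Y (ofLp v)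

lemma sum_norm_sq_sub_truncation_le (Y : Matrix m n 𝕜) (j : n) :
    ∑ i, ‖(Y - truncation Y) i j‖ ^ 2 ≤ 1 / 4 * ∑ k, ‖(Yᴴ * Y) k j‖ ^ 2 := by
  have hcol : (Y - truncation Y).col j = truncation Y *ᵥ (Yᴴ * Y).col j := by
    rw [sub_truncation]; rfl
  have hle := pow_le_pow_left₀ (norm_nonneg _)
    (norm_toLp_truncation_mulVec_le Y ((Yᴴ * Y).col j)) 2
  rw [← hcol, mul_pow, EuclideanSpace.norm_sq_eq, EuclideanSpace.norm_sq_eq] at hle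
  exact hle.trans_eq (congrArg (· * _) (by norm_num))

end Truncation

section RandomPhases

lemma expect_norm_sq_sum_mul_addChar {A ι : Type*} [AddCommGroup A] [Fintype A] [Fintype ι]
    {χ : ι → AddChar A ℂ} (hχ : Function.Injective χ) (c : ι → ℂ) :
    𝔼 x, ‖∑ i, c i * χ i x‖ ^ 2 = ∑ i, ‖c i‖ ^ 2 := by
  classical
  have horth (i j : ι) : 𝔼 x, conj (χ i x) * χ j x = if i = j then 1 else 0 := by
    have h := AddChar.wInner_cWeight_eq_boole (χ i) (χ j)
    simpa [RCLike.wInner_cWeight_eq_expect, hχ.eq_iff, mul_comm] using h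
  have hcomplex : 𝔼 x, (conj (∑ i, c i * χ i x)) * ∑ i, c i * χ i x = ∑ i, conj (c i) * c i := by
    calc 𝔼 x, (conj (∑ i, c i * χ i x)) * ∑ i, c i * χ i x
        = 𝔼 x, ∑ i, ∑ j, conj (c i) * c j * (conj (χ i x) * χ j x) := by
          refine Finset.expect_congr rfl fun x _ ↦ ?_
          rw [map_sum, Finset.sum_mul_sum]
          refine Finset.sum_congr rfl fun i _ ↦ Finset.sum_congr rfl fun j _ ↦ ?_
          rw [map_mul]
          ring
      _ = ∑ i, conj (c i) * c i := by
          simp only [Finset.expect_sum_comm, ← Finset.mul_expect, horth, mul_ite, mul_one, mul_zero,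
            Finset.sum_ite_eq, Finset.mem_univ, if_true]
  simp only [Complex.conj_mul'] at hcomplex
  exact_mod_cast hcomplex

variable {X : Type*}

/-- The random phase attached to `x`: the `x`-th coordinate of a uniformly random point of
`(ℤ/3)^X`, read as a cube root of unity. Signs would not do, since the products of two phases
must be uncorrelated even when they involve the same two elements of `X`. -/
def phase (x : X) : AddChar (X → ZMod 3) ℂ :=
  ZMod.stdAddChar.compAddMonoidHom (Pi.evalAddMonoidHom _ x)

lemma norm_phase [Finite X] (x : X) (ω : X → ZMod 3) : ‖phase x ω‖ = 1 :=
  AddChar.norm_apply _ _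

lemma conj_phase_mul_phase [Finite X] (x : X) (ω : X → ZMod 3) :
    conj (phase x ω) * phase x ω = 1 := by
  rw [Complex.conj_mul', norm_phase]
  norm_num

lemma injective_phase_div_phase {ι : Type*} {x y : ι → X} (hx : Function.Injective x)
    (hxy : ∀ i, x i ≠ y i) : Function.Injective fun i ↦ phase (x i) / phase (y i) := by
  classical
  intro i j hij
  by_contra hne
  have hval := DFunLike.congr_fun hij (Pi.single (x i) 1)
  simp only [AddChar.div_apply, phase, AddChar.compAddMonoidHom_apply, Pi.evalAddMonoidHom_apply,
    ← AddChar.map_add_eq_mul, ZMod.injective_stdAddChar.eq_iff, Pi.neg_apply, Pi.single_eq_same,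
    Pi.single_eq_of_ne' (hxy i), Pi.single_eq_of_ne' (hx.ne hne)] at hval
  by_cases h : y j = x i
  · rw [h, Pi.single_eq_same] at hval
    exact (by decide : (1 : ZMod 3) + -0 ≠ 0 + -1) hval
  · rw [Pi.single_eq_of_ne h] at hval
    exact (by decide : (1 : ZMod 3) + -0 ≠ 0 + -0) hval

end RandomPhases

section RowColBounded

variable {m n : Type*} [Fintype m] [Fintype n]

/-- All rows and columns of `a` have squared `ℓ²`-norm at most `r`. -/
structure RowColBounded (a : Matrix m n ℂ) (r : ℝ) : Prop where
  row : ∀ i, ∑ j, ‖a i j‖ ^ 2 ≤ r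
  col : ∀ j, ∑ i, ‖a i j‖ ^ 2 ≤ r

variable {a : Matrix m n ℂ} {r : ℝ}

lemma RowColBounded.transpose (ha : RowColBounded a r) : RowColBounded aᵀ r :=
  ⟨ha.col, ha.row⟩

lemma RowColBounded.mono {r' : ℝ} (ha : RowColBounded a r) (hr : r ≤ r') :
    RowColBounded a r' :=
  ⟨fun i ↦ (ha.row i).trans hr, fun j ↦ (ha.col j).trans hr⟩

lemma RowColBounded.norm_sq_apply_le (ha : RowColBounded a r) (i : m) (j : n) :
    ‖a i j‖ ^ 2 ≤ r :=
  (Finset.single_le_sum (f := fun j ↦ ‖a i j‖ ^ 2) (fun _ _ ↦ sq_nonneg _)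
    (Finset.mem_univ j)).trans (ha.row i)

lemma RowColBounded.smul (ha : RowColBounded a r) (c : ℂ) :
    RowColBounded (c • a) (‖c‖ ^ 2 * r) := by
  constructor
  all_goals
    intro k
    simp only [Matrix.smul_apply, smul_eq_mul, norm_mul, mul_pow, ← Finset.mul_sum]
  exacts [mul_le_mul_of_nonneg_left (ha.row k) (sq_nonneg _),
    mul_le_mul_of_nonneg_left (ha.col k) (sq_nonneg _)]

end RowColBounded

section Residual

variable {m n X : Type*} [Fintype m]

/-- The matrix `a` with its `(i, j)` entry multiplied by the random phase attached to `μ i j`. -/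
def phased (μ : m → n → X) (a : Matrix m n ℂ) (ω : X → ZMod 3) : Matrix m n ℂ :=
  Matrix.of fun i j ↦ phase (μ i j) ω * a i j

lemma conjTranspose_phased_mul_phased_apply [Finite X] (μ : m → n → X)
    (a : Matrix m n ℂ) (ω : X → ZMod 3) (k j : n) : ((phased μ a ω)ᴴ * phased μ a ω) k j =
      ∑ i, conj (a i k) * a i j * (phase (μ i j) / phase (μ i k)) ω := by
  rw [Matrix.mul_apply]
  refine Finset.sum_congr rfl fun i _ ↦ ?_
  simp only [phased, Matrix.conjTranspose_apply, Matrix.of_apply, AddChar.div_apply,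
    AddChar.map_neg_eq_conj, star_mul', RCLike.star_def]
  ring

lemma norm_conjTranspose_phased_mul_phased_diag [Finite X] (μ : m → n → X)
    (a : Matrix m n ℂ) (ω : X → ZMod 3) (j : n) :
    ‖((phased μ a ω)ᴴ * phased μ a ω) j j‖ = ∑ i, ‖a i j‖ ^ 2 := by
  simp only [conjTranspose_phased_mul_phased_apply, div_self', AddChar.one_apply, mul_one,
    Complex.conj_mul', ← Complex.ofReal_pow, ← Complex.ofReal_sum]
  exact Complex.norm_of_nonneg (Finset.sum_nonneg fun i _ ↦ sq_nonneg _)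

variable [Fintype X] [DecidableEq X] {μ : m → n → X} {a : Matrix m n ℂ}

lemma expect_norm_sq_conjTranspose_phased_mul_phased (hrow : ∀ i, Function.Injective (μ i))
    (hcol : ∀ j, Function.Injective (μ · j)) {k j : n} (hkj : k ≠ j) :
    𝔼 ω, ‖((phased μ a ω)ᴴ * phased μ a ω) k j‖ ^ 2 = ∑ i, ‖a i k‖ ^ 2 * ‖a i j‖ ^ 2 := by
  simp only [conjTranspose_phased_mul_phased_apply]
  rw [expect_norm_sq_sum_mul_addChar
    (injective_phase_div_phase (hcol j) fun i ↦ (hrow i).ne hkj.symm)]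
  simp only [norm_mul, RCLike.norm_conj, mul_pow]

variable [Fintype n] {r : ℝ}

lemma RowColBounded.expect_sum_norm_sq_conjTranspose_phased_mul_phased_le
    (ha : RowColBounded a r) (hrow : ∀ i, Function.Injective (μ i))
    (hcol : ∀ j, Function.Injective (μ · j)) (j : n) :
    𝔼 ω, ∑ k, ‖((phased μ a ω)ᴴ * phased μ a ω) k j‖ ^ 2 ≤ 2 * r ^ 2 := by
  classical
  have hr : 0 ≤ r := (Finset.sum_nonneg fun i _ ↦ sq_nonneg _).trans (ha.col j)
  have hdiag : 𝔼 ω, ‖((phased μ a ω)ᴴ * phased μ a ω) j j‖ ^ 2 ≤ r ^ 2 := by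
    simp only [norm_conjTranspose_phased_mul_phased_diag, Fintype.expect_const]
    exact pow_le_pow_left₀ (Finset.sum_nonneg fun i _ ↦ sq_nonneg _) (ha.col j) 2
  have hoff : ∑ k ∈ Finset.univ.erase j, 𝔼 ω, ‖((phased μ a ω)ᴴ * phased μ a ω) k j‖ ^ 2 ≤ r ^ 2 :=
    calc ∑ k ∈ Finset.univ.erase j, 𝔼 ω, ‖((phased μ a ω)ᴴ * phased μ a ω) k j‖ ^ 2
        = ∑ k ∈ Finset.univ.erase j, ∑ i, ‖a i k‖ ^ 2 * ‖a i j‖ ^ 2 :=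
          Finset.sum_congr rfl fun k hk ↦ expect_norm_sq_conjTranspose_phased_mul_phased
            hrow hcol (Finset.ne_of_mem_erase hk)
      _ ≤ ∑ k, ∑ i, ‖a i k‖ ^ 2 * ‖a i j‖ ^ 2 :=
          Finset.sum_le_univ_sum_of_nonneg fun k ↦ by positivity
      _ = ∑ i, (∑ k, ‖a i k‖ ^ 2) * ‖a i j‖ ^ 2 := by
          rw [Finset.sum_comm]
          simp only [Finset.sum_mul]
      _ ≤ ∑ i, r * ‖a i j‖ ^ 2 := by
          gcongr with i
          exact ha.row i
      _ ≤ r ^ 2 := by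
          rw [← Finset.mul_sum, sq]
          exact mul_le_mul_of_nonneg_left (ha.col j) hr
  rw [Finset.expect_sum_comm, ← Finset.add_sum_erase _ _ (Finset.mem_univ j)]
  linarith

variable [DecidableEq n]

/-- What remains of `a` once its phased versions are truncated and the phases are averaged out:
`a` is this matrix plus the average of `conj (phase) • truncation (phased μ a ω)`. -/
def truncationResidual (μ : m → n → X) (a : Matrix m n ℂ) : Matrix m n ℂ :=
  Matrix.of fun i j ↦
    𝔼 ω, conj (phase (μ i j) ω) * (phased μ a ω - truncation (phased μ a ω)) i j

lemma norm_sq_truncationResidual_apply_le (μ : m → n → X) (a : Matrix m n ℂ) (i : m) (j : n) :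
    ‖truncationResidual μ a i j‖ ^ 2 ≤
      𝔼 ω, ‖(phased μ a ω - truncation (phased μ a ω)) i j‖ ^ 2 := by
  have hnorm : ‖truncationResidual μ a i j‖ ≤
      𝔼 ω, 1 * ‖(phased μ a ω - truncation (phased μ a ω)) i j‖ := by
    refine (RCLike.norm_expect_le (K := ℂ)).trans_eq (Finset.expect_congr rfl fun ω _ ↦ ?_)
    rw [norm_mul, RCLike.norm_conj, norm_phase]
  refine (pow_le_pow_left₀ (norm_nonneg _) hnorm 2).trans ?_
  refine (Finset.expect_mul_sq_le_sq_mul_sq _ _ _).trans_eq ?_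
  rw [one_pow, Fintype.expect_const, one_mul]

lemma RowColBounded.sum_norm_sq_truncationResidual_col_le (ha : RowColBounded a r)
    (hrow : ∀ i, Function.Injective (μ i)) (hcol : ∀ j, Function.Injective (μ · j)) (j : n) :
    ∑ i, ‖truncationResidual μ a i j‖ ^ 2 ≤ 1 / 2 * r ^ 2 :=
  calc ∑ i, ‖truncationResidual μ a i j‖ ^ 2
      ≤ ∑ i, 𝔼 ω, ‖(phased μ a ω - truncation (phased μ a ω)) i j‖ ^ 2 := by
        gcongr with i
        exact norm_sq_truncationResidual_apply_le μ a i j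
    _ = 𝔼 ω, ∑ i, ‖(phased μ a ω - truncation (phased μ a ω)) i j‖ ^ 2 :=
        (Finset.expect_sum_comm _ _ _).symm
    _ ≤ 𝔼 ω, 1 / 4 * ∑ k, ‖((phased μ a ω)ᴴ * phased μ a ω) k j‖ ^ 2 :=
        Finset.expect_le_expect fun ω _ ↦ sum_norm_sq_sub_truncation_le _ j
    _ ≤ 1 / 2 * r ^ 2 := by
        rw [← Finset.mul_expect]
        linarith [ha.expect_sum_norm_sq_conjTranspose_phased_mul_phased_le hrow hcol j]

lemma truncationResidual_transpose [DecidableEq m] (μ : m → n → X) (a : Matrix m n ℂ) :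
    truncationResidual (fun j i ↦ μ i j) aᵀ = (truncationResidual μ a)ᵀ := by
  have hphased (ω : X → ZMod 3) : phased (fun j i ↦ μ i j) aᵀ ω = (phased μ a ω)ᵀ := rfl
  ext j i
  simp only [truncationResidual, hphased, truncation_transpose, Matrix.of_apply,
    Matrix.transpose_apply, Matrix.sub_apply]

lemma RowColBounded.truncationResidual (ha : RowColBounded a r)
    (hrow : ∀ i, Function.Injective (μ i)) (hcol : ∀ j, Function.Injective (μ · j)) :
    RowColBounded (truncationResidual μ a) (1 / 2 * r ^ 2) where
  row i := by
    classical
    have h := ha.transpose.sum_norm_sq_truncationResidual_col_le hcol hrow i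
    rwa [truncationResidual_transpose] at h
  col := ha.sum_norm_sq_truncationResidual_col_le hrow hcol

end Residual

section HadamardBound

variable {m n X : Type*} [Fintype m] [Fintype n] [DecidableEq n]

lemma norm_expect_le {ι E : Type*} [NormedAddCommGroup E] [NormedSpace ℝ E] [Module ℚ≥0 E]
    (s : Finset ι) (f : ι → E) : ‖𝔼 i ∈ s, f i‖ ≤ 𝔼 i ∈ s, ‖f i‖ := by
  refine Finset.le_expect_of_subadditive norm_zero norm_add_le fun k v ↦ ?_
  rw [← NNRat.cast_smul_eq_nnqsmul ℝ, norm_smul, Real.norm_of_nonneg (by positivity),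
    ← smul_eq_mul, NNRat.cast_smul_eq_nnqsmul ℝ]

lemma hadamard_eq_expect_add_hadamard_truncationResidual [Fintype X] [DecidableEq X]
    (μ : m → n → X) (M a : Matrix m n ℂ) :
    M ⊙ a = 𝔼 ω, Matrix.of (fun i j ↦ conj (phase (μ i j) ω) * M i j) ⊙
      truncation (phased μ a ω) + M ⊙ truncationResidual μ a := by
  ext i j
  have happly (B : (X → ZMod 3) → Matrix m n ℂ) : (𝔼 ω, B ω) i j = 𝔼 ω, B ω i j :=
    map_expect (Matrix.entryLinearMap ℚ≥0 ℂ i j) B Finset.univ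
  have hentry (ω : X → ZMod 3) : M i j * a i j =
      conj (phase (μ i j) ω) * M i j * truncation (phased μ a ω) i j + M i j *
        (conj (phase (μ i j) ω) * (phased μ a ω - truncation (phased μ a ω)) i j) := by
    rw [Matrix.sub_apply, phased, Matrix.of_apply]
    linear_combination -(M i j * a i j) * conj_phase_mul_phase (μ i j) ω
  simp only [Matrix.add_apply, happly, Matrix.hadamard_apply, Matrix.of_apply, truncationResidual,
    Finset.mul_expect, ← Finset.expect_add_distrib, ← hentry, Fintype.expect_const]

lemma norm_hadamard_le_add_norm_hadamard_truncationResidual [Fintype X] [DecidableEq X]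
    {μ : m → n → X} {M : Matrix m n ℂ} {C : ℝ} (hC : 0 ≤ C)
    (h : ∀ ε : X → ℂ, (∀ x, ‖ε x‖ ≤ 1) → ∀ A : Matrix m n ℂ,
      ‖Matrix.of (fun i j ↦ ε (μ i j) * M i j) ⊙ A‖ ≤ C * ‖A‖) (a : Matrix m n ℂ) :
    ‖M ⊙ a‖ ≤ C / 2 + ‖M ⊙ truncationResidual μ a‖ := by
  have hterm (ω : X → ZMod 3) : ‖Matrix.of (fun i j ↦ conj (phase (μ i j) ω) * M i j) ⊙
      truncation (phased μ a ω)‖ ≤ C / 2 := by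
    refine (h (fun x ↦ conj (phase x ω)) (fun x ↦ ?_) _).trans ?_
    · rw [RCLike.norm_conj, norm_phase]
    · linarith [mul_le_mul_of_nonneg_left (norm_truncation_le (phased μ a ω)) hC]
  rw [hadamard_eq_expect_add_hadamard_truncationResidual μ M a]
  refine (norm_add_le _ _).trans (add_le_add_left ?_ _)
  exact (norm_expect_le _ _).trans (Finset.expect_le Finset.univ_nonempty fun ω _ ↦ hterm ω)

lemma RowColBounded.norm_hadamard_le_sum [DecidableEq m] {a : Matrix m n ℂ}
    (ha : RowColBounded a 1) (M : Matrix m n ℂ) :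
    ‖M ⊙ a‖ ≤ ∑ i, ∑ j, ‖Matrix.single i j (M i j)‖ := by
  have hentry (i : m) (j : n) : ‖a i j‖ ≤ 1 :=
    (sq_le_one_iff₀ (norm_nonneg _)).mp (ha.norm_sq_apply_le i j)
  have hsum : M ⊙ a = ∑ i, ∑ j, a i j • Matrix.single i j (M i j) := by
    refine (Matrix.matrix_eq_sum_single _).trans ?_
    simp only [Matrix.hadamard_apply, Matrix.smul_single, smul_eq_mul, mul_comm]
  rw [hsum]
  refine (norm_sum_le _ _).trans (Finset.sum_le_sum fun i _ ↦ ?_)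
  refine (norm_sum_le _ _).trans (Finset.sum_le_sum fun j _ ↦ ?_)
  rw [norm_smul]
  exact mul_le_of_le_one_left (norm_nonneg _) (hentry i j)

lemma norm_hadamard_le_of_finite [Finite X] {μ : m → n → X}
    (hrow : ∀ i, Function.Injective (μ i)) (hcol : ∀ j, Function.Injective (μ · j))
    {M : Matrix m n ℂ} {C : ℝ} (hC : 0 ≤ C)
    (h : ∀ ε : X → ℂ, (∀ x, ‖ε x‖ ≤ 1) → ∀ A : Matrix m n ℂ,
      ‖Matrix.of (fun i j ↦ ε (μ i j) * M i j) ⊙ A‖ ≤ C * ‖A‖)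
    {a : Matrix m n ℂ} (ha : RowColBounded a 1) : ‖M ⊙ a‖ ≤ 2 * C := by
  classical
  cases nonempty_fintype X
  let norms := (fun a : Matrix m n ℂ ↦ ‖M ⊙ a‖) '' {a | RowColBounded a 1}
  have hbdd : BddAbove norms :=
    ⟨_, by rintro _ ⟨b, hb, rfl⟩; exact RowColBounded.norm_hadamard_le_sum hb M⟩
  have hstep (b : Matrix m n ℂ) (hb : RowColBounded b 1) :
      ‖M ⊙ b‖ ≤ C / 2 + 3 / 4 * sSup norms := by
    have hball : RowColBounded ((4 / 3 : ℂ) • truncationResidual μ b) 1 :=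
      ((hb.truncationResidual hrow hcol).smul (4 / 3)).mono (by norm_num)
    have hle : 4 / 3 * ‖M ⊙ truncationResidual μ b‖ ≤ sSup norms := by
      have := le_csSup hbdd ⟨_, hball, rfl⟩
      simpa [Matrix.hadamard_smul, norm_smul] using this
    linarith [norm_hadamard_le_add_norm_hadamard_truncationResidual hC h b]
  have hsup : sSup norms ≤ C / 2 + 3 / 4 * sSup norms :=
    csSup_le (⟨_, a, ha, rfl⟩) (by rintro _ ⟨b, hb, rfl⟩; exact hstep b hb)
  linarith [hstep a ha]

lemma norm_hadamard_le {μ : m → n → X}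
    (hrow : ∀ i, Function.Injective (μ i)) (hcol : ∀ j, Function.Injective (μ · j))
    {M : Matrix m n ℂ} {C : ℝ} (hC : 0 ≤ C)
    (h : ∀ ε : X → ℂ, (∀ x, ‖ε x‖ ≤ 1) → ∀ A : Matrix m n ℂ,
      ‖Matrix.of (fun i j ↦ ε (μ i j) * M i j) ⊙ A‖ ≤ C * ‖A‖)
    {a : Matrix m n ℂ} (ha : RowColBounded a 1) : ‖M ⊙ a‖ ≤ 2 * C := by
  classical
  let ν (i : m) (j : n) : Set.range (fun p : m × n ↦ μ p.1 p.2) := ⟨μ i j, (i, j), rfl⟩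
  have hrow' (i : m) : Function.Injective (ν i) := fun j j' hj ↦ hrow i (congrArg Subtype.val hj)
  have hcol' (j : n) : Function.Injective (ν · j) := fun i i' hi ↦ hcol j (congrArg Subtype.val hi)
  refine norm_hadamard_le_of_finite hrow' hcol' hC (fun ε hε A ↦ ?_) ha
  have hextend : ∀ i j, Function.extend Subtype.val ε 0 (μ i j) = ε (ν i j) := fun i j ↦
    Subtype.val_injective.extend_apply ε 0 (ν i j)
  have hA := h (Function.extend Subtype.val ε 0) (fun x ↦ ?_) A
  · simpa only [hextend] using hA
  · by_cases hx : ∃ y : Set.range (fun p : m × n ↦ μ p.1 p.2), y.1 = x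
    · obtain ⟨y, rfl⟩ := hx
      rw [Subtype.val_injective.extend_apply]
      exact hε y
    · rw [Function.extend_apply' _ _ _ hx, Pi.zero_apply, norm_zero]
      exact zero_le_one

end HadamardBound

section LightRowOrColumn

variable {m n : Type*} [Fintype m] [Fintype n]

/-- The matrix `conj M` with each entry divided by the larger of the `ℓ²`-norms of its row and of
its column. Entries of zero rows and columns are `0 / 0 = 0`. -/
def rowColNormalized (M : Matrix m n ℂ) : Matrix m n ℂ :=
  Matrix.of fun i j ↦ conj (M i j) / √(max (∑ j', ‖M i j'‖ ^ 2) (∑ i', ‖M i' j‖ ^ 2))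

lemma norm_sq_rowColNormalized_apply (M : Matrix m n ℂ) (i : m) (j : n) :
    ‖rowColNormalized M i j‖ ^ 2 =
      ‖M i j‖ ^ 2 / max (∑ j', ‖M i j'‖ ^ 2) (∑ i', ‖M i' j‖ ^ 2) := by
  have hmax : 0 ≤ max (∑ j', ‖M i j'‖ ^ 2) (∑ i', ‖M i' j‖ ^ 2) :=
    le_max_of_le_left (Finset.sum_nonneg fun _ _ ↦ sq_nonneg _)
  rw [rowColNormalized, Matrix.of_apply, norm_div, RCLike.norm_conj, Complex.norm_real,
    Real.norm_of_nonneg (Real.sqrt_nonneg _), div_pow, Real.sq_sqrt hmax]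

lemma sum_div_le_one {ι : Type*} [Fintype ι] {w d : ι → ℝ} (hw : ∀ i, 0 ≤ w i)
    (hd : ∀ i, ∑ j, w j ≤ d i) : ∑ i, w i / d i ≤ 1 := by
  have hterm (i : ι) : w i / d i ≤ w i / ∑ j, w j := by
    obtain hi | hi := (hw i).eq_or_lt
    · rw [← hi, zero_div, zero_div]
    · have hpos : 0 < ∑ j, w j := Finset.sum_pos' (fun j _ ↦ hw j) ⟨i, Finset.mem_univ i, hi⟩
      exact div_le_div_of_nonneg_left (hw i) hpos (hd i)
  calc ∑ i, w i / d i ≤ ∑ i, w i / ∑ j, w j := Finset.sum_le_sum fun i _ ↦ hterm i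
    _ = (∑ i, w i) / ∑ j, w j := (Finset.sum_div _ _ _).symm
    _ ≤ 1 := div_self_le_one _

lemma rowColBounded_rowColNormalized (M : Matrix m n ℂ) :
    RowColBounded (rowColNormalized M) 1 where
  row i := by
    simp only [norm_sq_rowColNormalized_apply]
    exact sum_div_le_one (fun _ ↦ sq_nonneg _) fun _ ↦ le_max_left _ _
  col j := by
    simp only [norm_sq_rowColNormalized_apply]
    exact sum_div_le_one (fun _ ↦ sq_nonneg _) fun _ ↦ le_max_right _ _

lemma norm_dotProduct_mulVec_le [DecidableEq n] (A : Matrix m n ℂ) (x : m → ℂ) (y : n → ℂ) :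
    ‖x ⬝ᵥ (A *ᵥ y)‖ ≤ ‖A‖ * (‖toLp 2 x‖ * ‖toLp 2 y‖) := by
  have hstar : ‖toLp 2 (star x)‖ = ‖toLp 2 x‖ := by
    simp only [EuclideanSpace.norm_eq, Pi.star_apply, norm_star]
  calc ‖x ⬝ᵥ (A *ᵥ y)‖ = ‖inner ℂ (toLp 2 (star x)) (toLp 2 (A *ᵥ y))‖ := by
        rw [EuclideanSpace.inner_toLp_toLp, star_star, dotProduct_comm]
    _ ≤ ‖toLp 2 x‖ * ‖toLp 2 (A *ᵥ y)‖ := hstar ▸ norm_inner_le_norm _ _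
    _ ≤ ‖toLp 2 x‖ * (‖A‖ * ‖toLp 2 y‖) := by
        gcongr
        exact A.l2_opNorm_mulVec (toLp 2 y)
    _ = ‖A‖ * (‖toLp 2 x‖ * ‖toLp 2 y‖) := by ring

lemma norm_toLp_sqrt {ι : Type*} [Fintype ι] {w : ι → ℝ} (hw : ∀ i, 0 ≤ w i) :
    ‖toLp 2 fun i ↦ (√(w i) : ℂ)‖ = √(∑ i, w i) := by
  simp only [EuclideanSpace.norm_eq, Complex.norm_real, Real.norm_eq_abs, sq_abs,
    Real.sq_sqrt (hw _)]

lemma sqrt_mul_div_sqrt_max_mul_sqrt {r c : ℝ} (hr : 0 ≤ r) (hc : 0 ≤ c) :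
    √r * √c / √(max r c) = √(min r c) := by
  rw [← Real.sqrt_mul hr, ← min_mul_max, Real.sqrt_mul (le_min hr hc)]
  exact mul_div_cancel_of_imp fun h ↦
    Real.sqrt_eq_zero_of_nonpos (min_le_max.trans (Real.sqrt_eq_zero'.mp h))

lemma sum_norm_sq_mul_sqrt_min_le [DecidableEq n] (M : Matrix m n ℂ) :
    ∑ i, ∑ j, ‖M i j‖ ^ 2 * √(min (∑ j', ‖M i j'‖ ^ 2) (∑ i', ‖M i' j‖ ^ 2)) ≤
      ‖M ⊙ rowColNormalized M‖ * ∑ i, ∑ j, ‖M i j‖ ^ 2 := by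
  set r : m → ℝ := fun i ↦ ∑ j, ‖M i j‖ ^ 2
  set c : n → ℝ := fun j ↦ ∑ i, ‖M i j‖ ^ 2
  have hr_nonneg (i : m) : 0 ≤ r i := Finset.sum_nonneg fun _ _ ↦ sq_nonneg _
  have hc_nonneg (j : n) : 0 ≤ c j := Finset.sum_nonneg fun _ _ ↦ sq_nonneg _
  have htotal : √(∑ i, r i) * √(∑ j, c j) = ∑ i, r i := by
    rw [show ∑ j, c j = ∑ i, r i from Finset.sum_comm]
    exact Real.mul_self_sqrt (Finset.sum_nonneg fun i _ ↦ hr_nonneg i)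
  have hbilin := norm_dotProduct_mulVec_le (M ⊙ rowColNormalized M) (fun i ↦ (√(r i) : ℂ))
    fun j ↦ (√(c j) : ℂ)
  rw [norm_toLp_sqrt hr_nonneg, norm_toLp_sqrt hc_nonneg, htotal] at hbilin
  refine le_trans (le_of_eq ?_) hbilin
  have hform : (fun i ↦ (√(r i) : ℂ)) ⬝ᵥ ((M ⊙ rowColNormalized M) *ᵥ fun j ↦ (√(c j) : ℂ)) =
      ((∑ i, ∑ j, ‖M i j‖ ^ 2 * √(min (r i) (c j)) : ℝ) : ℂ) := by
    push_cast
    simp only [dotProduct, Matrix.mulVec, Finset.mul_sum]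
    refine Finset.sum_congr rfl fun i _ ↦ Finset.sum_congr rfl fun j _ ↦ ?_
    rw [← sqrt_mul_div_sqrt_max_mul_sqrt (hr_nonneg i) (hc_nonneg j), Matrix.hadamard_apply,
      rowColNormalized, Matrix.of_apply, ← Complex.mul_conj']
    push_cast
    ring
  rw [hform, Complex.norm_of_nonneg]
  positivity

lemma exists_row_or_col_sum_norm_sq_le [DecidableEq n] [Nonempty m] {M : Matrix m n ℂ} {K : ℝ}
    (hM : ‖M ⊙ rowColNormalized M‖ ≤ K) :
    (∃ i, ∑ j, ‖M i j‖ ^ 2 ≤ K ^ 2) ∨ ∃ j, ∑ i, ‖M i j‖ ^ 2 ≤ K ^ 2 := by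
  by_contra! hheavy
  obtain ⟨hrow, hcol⟩ := hheavy
  have hmin (i : m) (j : n) : K < √(min (∑ j', ‖M i j'‖ ^ 2) (∑ i', ‖M i' j‖ ^ 2)) :=
    Real.lt_sqrt_of_sq_lt (lt_min (hrow i) (hcol j))
  have hlt_row (i : m) : K * ∑ j, ‖M i j‖ ^ 2 <
      ∑ j, ‖M i j‖ ^ 2 * √(min (∑ j', ‖M i j'‖ ^ 2) (∑ i', ‖M i' j‖ ^ 2)) := by
    obtain ⟨j, -, hj⟩ := Finset.exists_ne_zero_of_sum_ne_zero
      ((sq_nonneg K).trans_lt (hrow i)).ne'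
    rw [mul_comm, Finset.sum_mul]
    exact Finset.sum_lt_sum (fun j _ ↦ mul_le_mul_of_nonneg_left (hmin i j).le (sq_nonneg _))
      ⟨j, Finset.mem_univ j, mul_lt_mul_of_pos_left (hmin i j) ((sq_nonneg _).lt_of_ne' hj)⟩
  have hlt := Finset.sum_lt_sum_of_nonempty Finset.univ_nonempty fun i _ ↦ hlt_row i
  rw [← Finset.mul_sum] at hlt
  exact (hlt.trans_le (sum_norm_sq_mul_sqrt_min_le M)).not_ge (by gcongr)

end LightRowOrColumn

section Compression

variable {𝕜 m n H H' : Type*} [RCLike 𝕜] [Fintype m] [Fintype n]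
  [NormedAddCommGroup H] [InnerProductSpace 𝕜 H] [NormedAddCommGroup H'] [InnerProductSpace 𝕜 H']

lemma norm_sum_smul_of_orthonormal {e : n → H} (he : Orthonormal 𝕜 e) (c : n → 𝕜) :
    ‖∑ j, c j • e j‖ = ‖toLp 2 c‖ := by
  rw [← sq_eq_sq₀ (norm_nonneg _) (norm_nonneg _), EuclideanSpace.norm_sq_eq,
    ← inner_self_eq_norm_sq (𝕜 := 𝕜), he.inner_sum, map_sum]
  exact Finset.sum_congr rfl fun j _ ↦ by
    rw [RCLike.conj_mul, ← RCLike.ofReal_pow, RCLike.ofReal_re]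

lemma norm_toLp_inner_le_of_orthonormal {e : n → H} (he : Orthonormal 𝕜 e) (x : H) :
    ‖toLp 2 fun j ↦ inner 𝕜 (e j) x‖ ≤ ‖x‖ := by
  rw [← sq_le_sq₀ (norm_nonneg _) (norm_nonneg _), EuclideanSpace.norm_sq_eq]
  exact he.sum_inner_products_le x

variable [DecidableEq n]

lemma norm_of_inner_le_of_orthonormal {e : n → H} {f : m → H'} (he : Orthonormal 𝕜 e)
    (hf : Orthonormal 𝕜 f) (B : H →L[𝕜] H') :
    ‖Matrix.of fun i j ↦ inner 𝕜 (f i) (B (e j))‖ ≤ ‖B‖ := by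
  rw [Matrix.l2_opNorm_def]
  refine ContinuousLinearMap.opNorm_le_bound _ (norm_nonneg B) fun v ↦ ?_
  have happly : (Matrix.of fun i j ↦ inner 𝕜 (f i) (B (e j))) *ᵥ ofLp v =
      fun i ↦ inner 𝕜 (f i) (B (∑ j, v j • e j)) := by
    ext i
    simp only [Matrix.mulVec, dotProduct, Matrix.of_apply, map_sum, map_smul, inner_sum,
      inner_smul_right, mul_comm]
  calc ‖toLp 2 ((Matrix.of fun i j ↦ inner 𝕜 (f i) (B (e j))) *ᵥ ofLp v)‖
      ≤ ‖B (∑ j, v j • e j)‖ := happly ▸ norm_toLp_inner_le_of_orthonormal hf _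
    _ ≤ ‖B‖ * ‖∑ j, v j • e j‖ := B.le_opNorm _
    _ = ‖B‖ * ‖v‖ := by rw [norm_sum_smul_of_orthonormal he]

lemma exists_clm_inner_eq_of_orthonormal {e : n → H} {f : m → H'} (he : Orthonormal 𝕜 e)
    (hf : Orthonormal 𝕜 f) (A : Matrix m n 𝕜) :
    ∃ L : H →L[𝕜] H', (∀ i j, inner 𝕜 (f i) (L (e j)) = A i j) ∧ ‖L‖ ≤ ‖A‖ := by
  let L : H →L[𝕜] H' := ∑ i, ∑ j, A i j • (innerSL 𝕜 (e j)).smulRight (f i)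
  have happly (x : H) : L x = ∑ i, (A *ᵥ fun j ↦ inner 𝕜 (e j) x) i • f i := by
    simp only [L, _root_.sum_apply, _root_.smul_apply,
      ContinuousLinearMap.smulRight_apply, innerSL_apply_apply, smul_smul, Matrix.mulVec,
      dotProduct, Finset.sum_smul]
  refine ⟨L, fun i j ↦ ?_, L.opNorm_le_bound (norm_nonneg A) fun x ↦ ?_⟩
  · have hcoord : (fun k ↦ inner 𝕜 (e k) (e j)) = Pi.single j (1 : 𝕜) := by
      ext k
      rw [orthonormal_iff_ite.mp he, Pi.single_apply]
    rw [happly, hcoord, hf.inner_right_fintype, Matrix.mulVec_single_one, Matrix.col_apply]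
  · calc ‖L x‖ = ‖toLp 2 (A *ᵥ fun j ↦ inner 𝕜 (e j) x)‖ := by
          rw [happly, norm_sum_smul_of_orthonormal hf]
      _ ≤ ‖A‖ * ‖toLp 2 fun j ↦ inner 𝕜 (e j) x‖ := A.l2_opNorm_mulVec (toLp 2 _)
      _ ≤ ‖A‖ * ‖x‖ := by
          gcongr
          exact norm_toLp_inner_le_of_orthonormal he x

end Compression

section SchurMultiplier

lemma orthonormal_lp_single {ι : Type*} [DecidableEq ι] :
    Orthonormal ℂ fun i : ι ↦ (lp.single 2 i 1 : lp (fun _ : ι ↦ ℂ) 2) := by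
  rw [orthonormal_iff_ite]
  intro i j
  rw [lp.inner_single_left, lp.single_apply, Pi.single_apply]
  split_ifs <;> simp

lemma IsSchurMultiplier.norm_hadamard_le {S T m n : Type*} [Fintype m] [Fintype n] [DecidableEq n]
    {ψ : S × T → ℂ} {C : ℝ} (hC : 0 ≤ C) (hψ : IsSchurMultiplier ψ C)
    {f : n → S} (hf : Function.Injective f) {g : m → T} (hg : Function.Injective g)
    (A : Matrix m n ℂ) : ‖Matrix.of (fun i j ↦ ψ (f j, g i)) ⊙ A‖ ≤ C * ‖A‖ := by
  let := Classical.decEq S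
  let := Classical.decEq T
  have hS := orthonormal_lp_single.comp f hf
  have hT := orthonormal_lp_single.comp g hg
  obtain ⟨L, hentries, hL⟩ := exists_clm_inner_eq_of_orthonormal hS hT A
  obtain ⟨B, hB, hnorm⟩ := hψ L
  have hcompress : Matrix.of (fun i j ↦ ψ (f j, g i)) ⊙ A =
      Matrix.of fun i j ↦ inner ℂ (lp.single 2 (g i) (1 : ℂ)) (B (lp.single 2 (f j) 1)) := by
    ext i j
    exact ((hB (f j) (g i)).trans (congrArg _ (hentries i j))).symm
  calc ‖Matrix.of (fun i j ↦ ψ (f j, g i)) ⊙ A‖ ≤ ‖B‖ :=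
        hcompress ▸ norm_of_inner_le_of_orthonormal hS hT B
    _ ≤ C * ‖L‖ := hnorm
    _ ≤ C * ‖A‖ := mul_le_mul_of_nonneg_left hL hC

end SchurMultiplier

section Partition

variable {S T M : Type*} [AddCommMonoid M] [Preorder M]

/-- `Γ` splits the mass of `w` on the rectangle `E × F` so that the part on `Γ` has row sums at
most `K` and the part off `Γ` has column sums at most `K`. -/
structure SplitsRectangle (w : S × T → M) (K : M) (E : Finset S) (F : Finset T)
    (Γ : Set (S × T)) : Prop where
  row : ∀ s ∈ E, ∑ t ∈ F, Γ.indicator w (s, t) ≤ K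
  col : ∀ t ∈ F, ∑ s ∈ E, Γᶜ.indicator w (s, t) ≤ K

variable {w : S × T → M} {K : M} {E : Finset S} {F : Finset T} {Γ : Set (S × T)}

lemma SplitsRectangle.swap (h : SplitsRectangle w K E F Γ) :
    SplitsRectangle (w ∘ Prod.swap) K F E (Prod.swap ⁻¹' Γᶜ) where
  row := h.col
  col := by
    rw [← Set.preimage_compl, compl_compl]
    exact h.row

lemma SplitsRectangle.union_row [DecidableEq S] {s : S} (hs : ∑ t ∈ F, w (s, t) ≤ K)
    (h : SplitsRectangle w K (E.erase s) F Γ) :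
    SplitsRectangle w K E F (Γ ∪ {p | p.1 = s}) where
  row s' hs' := by
    obtain rfl | hne := eq_or_ne s' s
    · exact (Finset.sum_congr rfl fun t _ ↦ Set.indicator_of_mem (by simp) w).trans_le hs
    · refine (Finset.sum_congr rfl fun t _ ↦ ?_).trans_le
        (h.row s' (Finset.mem_erase.mpr ⟨hne, hs'⟩))
      exact Set.indicator_eq_indicator (by simp [hne]) rfl
  col t ht := by
    rw [← Finset.sum_erase E (a := s) (Set.indicator_of_notMem (by simp) w)]
    refine (Finset.sum_congr rfl fun s' hs' ↦ ?_).trans_le (h.col t ht)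
    exact Set.indicator_eq_indicator (by simp [Finset.ne_of_mem_erase hs']) rfl

lemma exists_splitsRectangle (hK : 0 ≤ K)
    (h : ∀ E : Finset S, ∀ F : Finset T, E.Nonempty → F.Nonempty →
      (∃ s ∈ E, ∑ t ∈ F, w (s, t) ≤ K) ∨ ∃ t ∈ F, ∑ s ∈ E, w (s, t) ≤ K)
    (E : Finset S) (F : Finset T) : ∃ Γ, SplitsRectangle w K E F Γ := by
  classical
  obtain rfl | hE := E.eq_empty_or_nonempty
  · exact ⟨∅, by simp, by simpa using fun _ _ ↦ hK⟩
  obtain rfl | hF := F.eq_empty_or_nonempty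
  · exact ⟨∅, by simpa using fun _ _ ↦ hK, by simp⟩
  obtain ⟨s, hs, hlight⟩ | ⟨t, ht, hlight⟩ := h E F hE hF
  · have := Finset.card_erase_lt_of_mem hs
    obtain ⟨Γ, hΓ⟩ := exists_splitsRectangle hK h (E.erase s) F
    exact ⟨_, hΓ.union_row hlight⟩
  · have := Finset.card_erase_lt_of_mem ht
    obtain ⟨Γ, hΓ⟩ := exists_splitsRectangle hK h E (F.erase t)
    exact ⟨_, (hΓ.swap.union_row hlight).swap⟩
termination_by E.card + F.card

-- The limit of the sets along an ultrafilter that contains every final segment of the index set.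
lemma exists_set_forall_finset_exists_ge {ι α : Type*} [Preorder ι] [IsDirectedOrder ι] [Nonempty ι]
    (Γ : ι → Set α) :
    ∃ Γ' : Set α, ∀ (P : Finset α) (i : ι), ∃ k ≥ i, ∀ p ∈ P, p ∈ Γ' ↔ p ∈ Γ k := by
  let U : Ultrafilter ι := .of Filter.atTop
  refine ⟨{p | ∀ᶠ k in U, p ∈ Γ k}, fun P i ↦ ?_⟩
  have hge : ∀ᶠ k in U, i ≤ k := Ultrafilter.of_le _ (Filter.eventually_ge_atTop i)
  have hagree (p : α) : ∀ᶠ k in U, (∀ᶠ k in U, p ∈ Γ k) ↔ p ∈ Γ k := by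
    by_cases hp : ∀ᶠ k in U, p ∈ Γ k
    · exact hp.mono fun k hk ↦ iff_of_true hp hk
    · exact (Ultrafilter.eventually_not.mpr hp).mono fun k hk ↦ iff_of_false hp hk
  obtain ⟨k, hik, hk⟩ := (hge.and ((Filter.eventually_all_finset P).mpr fun p _ ↦ hagree p)).exists
  exact ⟨k, hik, hk⟩

lemma exists_set_tsum_indicator_le {w : S × T → ℝ≥0∞} {K : ℝ≥0∞}
    (h : ∀ E F, ∃ Γ, SplitsRectangle w K E F Γ) :
    ∃ Γ : Set (S × T), (∀ s, ∑' t, Γ.indicator w (s, t) ≤ K) ∧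
      ∀ t, ∑' s, Γᶜ.indicator w (s, t) ≤ K := by
  classical
  choose Γ hΓ using fun q : Finset S × Finset T ↦ h q.1 q.2
  obtain ⟨Γ', hΓ'⟩ := exists_set_forall_finset_exists_ge Γ
  refine ⟨Γ', fun s ↦ ?_, fun t ↦ ?_⟩
  all_goals rw [ENNReal.tsum_eq_iSup_sum]
  · refine iSup_le fun F ↦ ?_
    obtain ⟨q, hq, hagree⟩ := hΓ' ({s} ×ˢ F) ({s}, F)
    calc ∑ t ∈ F, Γ'.indicator w (s, t) = ∑ t ∈ F, (Γ q).indicator w (s, t) :=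
          Finset.sum_congr rfl fun t ht ↦
            Set.indicator_eq_indicator (hagree (s, t) (by simpa using ht)) rfl
      _ ≤ ∑ t ∈ q.2, (Γ q).indicator w (s, t) := Finset.sum_le_sum_of_subset hq.2
      _ ≤ K := (hΓ q).row s (hq.1 (Finset.mem_singleton_self s))
  · refine iSup_le fun E ↦ ?_
    obtain ⟨q, hq, hagree⟩ := hΓ' (E ×ˢ {t}) (E, {t})
    calc ∑ s ∈ E, Γ'ᶜ.indicator w (s, t) = ∑ s ∈ E, (Γ q)ᶜ.indicator w (s, t) :=
          Finset.sum_congr rfl fun s hs ↦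
            Set.indicator_eq_indicator (hagree (s, t) (by simpa using hs)).not rfl
      _ ≤ ∑ s ∈ q.1, (Γ q)ᶜ.indicator w (s, t) := Finset.sum_le_sum_of_subset hq.1
      _ ≤ K := (hΓ q).col t (hq.2 (Finset.mem_singleton_self t))

end Partition

section Multipliers

variable {S T X : Type*} {μ : S → T → X} {ψ : S × T → ℂ} {C : ℝ}

lemma sum_nnnorm_sq_le_ofReal {ι : Type*} {E : Finset ι} {f : ι → ℂ} {r : ℝ}
    (h : ∑ i : E, ‖f i‖ ^ 2 ≤ r) : ∑ i ∈ E, (‖f i‖₊ : ℝ≥0∞) ^ 2 ≤ ENNReal.ofReal r := by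
  rw [Finset.sum_coe_sort E fun i ↦ ‖f i‖ ^ 2] at h
  refine le_of_eq_of_le ?_ (ENNReal.ofReal_le_ofReal h)
  rw [ENNReal.ofReal_sum_of_nonneg fun i _ ↦ sq_nonneg _]
  simp only [ENNReal.ofReal_pow (norm_nonneg _), ofReal_norm, enorm_eq_nnnorm]

lemma exists_row_or_col_sum_nnnorm_sq_le (hrow : ∀ s, Function.Injective (μ s))
    (hcol : ∀ t, Function.Injective (μ · t)) (hC : 0 ≤ C)
    (h : ∀ ε : X → ℂ, (∀ x, ‖ε x‖ ≤ 1) → IsSchurMultiplier (fun p ↦ ε (μ p.1 p.2) * ψ p) C)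
    {E : Finset S} {F : Finset T} (hF : F.Nonempty) :
    (∃ s ∈ E, ∑ t ∈ F, (‖ψ (s, t)‖₊ : ℝ≥0∞) ^ 2 ≤ ENNReal.ofReal ((2 * C) ^ 2)) ∨
      ∃ t ∈ F, ∑ s ∈ E, (‖ψ (s, t)‖₊ : ℝ≥0∞) ^ 2 ≤ ENNReal.ofReal ((2 * C) ^ 2) := by
  classical
  have := hF.to_subtype
  let M : Matrix F E ℂ := Matrix.of fun t s ↦ ψ (s, t)
  have hinj (s : E) : Function.Injective fun t : F ↦ μ s t :=
    (hrow s).comp Subtype.val_injective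
  have hinj' (t : F) : Function.Injective fun s : E ↦ μ s t :=
    (hcol t).comp Subtype.val_injective
  have hbound : ‖M ⊙ rowColNormalized M‖ ≤ 2 * C :=
    norm_hadamard_le hinj' hinj hC
      (fun ε hε A ↦ (h ε hε).norm_hadamard_le hC Subtype.val_injective Subtype.val_injective A)
      (rowColBounded_rowColNormalized M)
  obtain ⟨t, ht⟩ | ⟨s, hs⟩ := exists_row_or_col_sum_norm_sq_le hbound
  · exact .inr ⟨t, t.2, sum_nnnorm_sq_le_ofReal ht⟩
  · exact .inl ⟨s, s.2, sum_nnnorm_sq_le_ofReal hs⟩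

theorem stmt_6_general (hrow : ∀ s, Function.Injective (μ s))
    (hcol : ∀ t, Function.Injective (μ · t)) (hC : 0 ≤ C)
    (h : ∀ ε : X → ℂ, (∀ x, ‖ε x‖ ≤ 1) → IsSchurMultiplier (fun p ↦ ε (μ p.1 p.2) * ψ p) C) :
    ∃ Γ : Set (S × T),
      (∀ s, ∑' t, Γ.indicator (fun p ↦ (‖ψ p‖₊ : ℝ≥0∞) ^ 2) (s, t) ≤
        ENNReal.ofReal ((2 * C) ^ 2)) ∧
      ∀ t, ∑' s, Γᶜ.indicator (fun p ↦ (‖ψ p‖₊ : ℝ≥0∞) ^ 2) (s, t) ≤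
        ENNReal.ofReal ((2 * C) ^ 2) :=
  exists_set_tsum_indicator_le <| exists_splitsRectangle bot_le fun _ _ _ hF ↦
    exists_row_or_col_sum_nnnorm_sq_le hrow hcol hC h hF

end Multipliers

end

/-- if for every `ε : G → ℂ` with `|ε| ≤ 1` the kernel
`(s,t) ↦ ε(st)·φ(st)` is a Schur multiplier of norm at most `C`, then there is a disjoint
partition `G × G = Γ₁ ∪ Γ₂` with `sup_s Σ_{t:(s,t)∈Γ₁} |φ(st)|² ≤ (4C)²` and
`sup_t Σ_{s:(s,t)∈Γ₂} |φ(st)|² ≤ (4C)²`. -/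
theorem stmt_6 {G : Type*} [Group G] (φ : G → ℂ) (C : ℝ) (hC : 0 ≤ C)
    (h : ∀ ε : G → ℂ, (∀ x, ‖ε x‖ ≤ 1) →
      IsSchurMultiplier (fun p : G × G => ε (p.1 * p.2) * φ (p.1 * p.2)) C) :
    ∃ Γ₁ Γ₂ : Set (G × G), Γ₁ ∪ Γ₂ = Set.univ ∧ Disjoint Γ₁ Γ₂ ∧
      (∀ s : G, (∑' t : G, Γ₁.indicator (fun p => (‖φ (p.1 * p.2)‖₊ : ℝ≥0∞) ^ 2) (s, t))
          ≤ ENNReal.ofReal ((4 * C) ^ 2)) ∧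
      (∀ t : G, (∑' s : G, Γ₂.indicator (fun p => (‖φ (p.1 * p.2)‖₊ : ℝ≥0∞) ^ 2) (s, t))
          ≤ ENNReal.ofReal ((4 * C) ^ 2)) := by
  have hweaken : ENNReal.ofReal ((2 * C) ^ 2) ≤ ENNReal.ofReal ((4 * C) ^ 2) := by
    gcongr
    norm_num
  obtain ⟨Γ, hrow, hcol⟩ := stmt_6_general (fun s : G ↦ mul_right_injective s)
    (fun t : G ↦ mul_left_injective t) hC h
  exact ⟨Γ, Γᶜ, Set.union_compl_self Γ, disjoint_compl_right,
    fun s ↦ (hrow s).trans hweaken, fun t ↦ (hcol t).trans hweaken⟩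
end
end
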